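/- arXiv:1411.4196 — 3 statements merged into one kernel-verified Lean document; each statement's English description precedes it below -/
import Mathlib

section
/- For every ε > 0 there exist ℓ₀ and n₀ such that for all integers ℓ ≥ ℓ₀ and n ≥ n₀ the following holds: if ℱ is a family of nℓ subsets of [n] in which every set F ∈ ℱ is incomparable to at most 4ℓ·log ℓ other sets of ℱ, then i(ℱ) ≥ (1/2 − ε)·n·ℓ²·log ℓ. -/
open Finset

/-- `crossComp 𝒜 ℬ` is the number of pairs `(A, B) ∈ 𝒜 × ℬ` with `A ⊊ B`. -/
def crossComp {n : ℕ} (𝒜 ℬ : Finset (Finset (Fin n))) : ℕ :=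
  ((𝒜 ×ˢ ℬ).filter (fun p => p.1 ⊂ p.2)).card

/-- `compCount ℱ` is the number of comparable pairs in `ℱ`, i.e. the number of unordered
pairs `{A, B}` of distinct sets in `ℱ` with `A ⊆ B` or `B ⊆ A`. -/
def compCount {n : ℕ} (ℱ : Finset (Finset (Fin n))) : ℕ := crossComp ℱ ℱ

/-- `incompCount ℱ = i(ℱ)` is the number of incomparable (unordered, distinct) pairs in `ℱ`. -/
def incompCount {n : ℕ} (ℱ : Finset (Finset (Fin n))) : ℕ :=
  ℱ.card.choose 2 - compCount ℱ


section helpers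

variable {n : ℕ}
noncomputable def Lv (G : Finset (Finset (Fin n))) (q : ℝ) : ℕ → Finset (Finset (Fin n))
  | 0 => G
  | j+1 => G.filter (fun Z => q ≤ (((Lv G q j).filter (fun x => x ⊆ Z)).card : ℝ))

lemma Lv_sub (G : Finset (Finset (Fin n))) (q : ℝ) (j : ℕ) : Lv G q j ⊆ G := by
  cases j with
  | zero => exact subset_rfl
  | succ j => exact Finset.filter_subset _ _

lemma Lv_anti (G : Finset (Finset (Fin n))) (q : ℝ) (j : ℕ) : Lv G q (j+1) ⊆ Lv G q j := by
  induction j with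
  | zero => exact Finset.filter_subset _ _
  | succ j ih =>
    intro x hx
    rw [Lv, Finset.mem_filter] at hx ⊢
    refine ⟨hx.1, hx.2.trans ?_⟩
    exact_mod_cast Finset.card_le_card (Finset.filter_subset_filter _ ih)

lemma card_between (S : Finset (Finset (Fin n))) (W Z : Finset (Fin n)) (hWZ : W ⊆ Z) (lam : ℕ)
    (h1 : ∀ x ∈ S, W ⊆ x ∧ x ⊆ Z) (h2 : (2:ℝ)^lam ≤ S.card) : W.card + lam ≤ Z.card := by
  have h : S ⊆ Finset.Icc W Z := fun x hx => Finset.mem_Icc.2 (h1 x hx)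
  have h3 := Finset.card_le_card h
  rw [Finset.card_Icc_finset hWZ] at h3
  have h4 : 2^lam ≤ 2^(Z.card - W.card) := le_trans (by exact_mod_cast h2) h3
  have h5 := (Nat.pow_le_pow_iff_right (by norm_num : 1 < 2)).1 h4
  have := Finset.card_le_card hWZ
  omega

/-- double counting / Jensen step -/
lemma jensen_step (S Y : Finset (Finset (Fin n))) (q M : ℝ) (hq : 0 ≤ q) (hY : (Y.card:ℝ) ≤ M) (t : ℕ)
    (h : ∀ x ∈ S, q ≤ ((Y.filter (fun y => y ⊆ x)).card : ℝ)) :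
    (S.card * q)^(t+1) / M^t ≤
      ∑ T ∈ Fintype.piFinset (fun _ : Fin (t+1) => S), ((Y.filter (fun y => y ⊆ Finset.univ.inf T)).card : ℝ) := by
  have e1 : ∑ T ∈ Fintype.piFinset (fun _ : Fin (t+1) => S), ((Y.filter (fun y => y ⊆ Finset.univ.inf T)).card : ℝ)
      = ∑ y ∈ Y, ((S.filter (fun x => y ⊆ x)).card : ℝ)^(t+1) := by
    have := Finset.sum_card_bipartiteAbove_eq_sum_card_bipartiteBelow (s := Fintype.piFinset (fun _ : Fin (t+1) => S)) (t := Y)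
      (fun T y => y ⊆ Finset.univ.inf T)
    simp only [Finset.bipartiteAbove, Finset.bipartiteBelow] at this
    rw [← Nat.cast_sum, this, Nat.cast_sum]
    refine Finset.sum_congr rfl fun y _ => ?_
    rw [← Nat.cast_pow]
    congr 1
    rw [← Fintype.card_piFinset_const]
    congr 1
    ext T
    simp only [Finset.mem_filter, Fintype.mem_piFinset]
    have : y ⊆ Finset.univ.inf T ↔ ∀ i, y ⊆ T i := by
      rw [Finset.le_inf_iff]; simp
    rw [this]
    exact ⟨fun h i => ⟨h.1 i, h.2 i⟩, fun h => ⟨fun i => (h i).1, fun i => (h i).2⟩⟩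
  have e2 : (S.card : ℝ) * q ≤ ∑ y ∈ Y, ((S.filter (fun x => y ⊆ x)).card : ℝ) := by
    have := Finset.sum_card_bipartiteAbove_eq_sum_card_bipartiteBelow (s := S) (t := Y)
      (fun x y => y ⊆ x)
    simp only [Finset.bipartiteAbove, Finset.bipartiteBelow] at this
    rw [← Nat.cast_sum, ← this, Nat.cast_sum, ← nsmul_eq_mul]
    exact Finset.card_nsmul_le_sum _ _ _ h
  rw [e1]
  rcases Y.eq_empty_or_nonempty with hYe | hYe
  · subst hYe
    simp at e2 ⊢
    have : (S.card : ℝ) * q = 0 := le_antisymm e2 (by positivity)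
    rw [this]; simp
  · have hYc : (0:ℝ) < Y.card := by exact_mod_cast hYe.card_pos
    refine le_trans ?_ (pow_sum_div_card_le_sum_pow (s := Y) (f := fun y => ((S.filter (fun x => y ⊆ x)).card : ℝ)) (fun _ _ => by positivity) t)
    have : (0:ℝ) ≤ S.card * q := by positivity
    gcongr

lemma climb (G : Finset (Finset (Fin n))) (A B : Finset (Fin n)) (hAB : ∀ x ∈ G, A ⊆ x ∧ x ⊆ B)
    (M γ q' : ℝ) (hγ : 0 < γ) (hM : 0 < M) (hG : (G.card : ℝ) ≤ M) (lam t : ℕ)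
    (hq' : q' = γ^(t+1) * M / 2)
    (ha : (2:ℝ)^lam ≤ q')
    (hb : 4 * (2:ℝ)^(B.card - A.card) * ((2:ℝ)^lam)^(t+1) ≤ (γ * q')^(t+1)) :
    ∀ (j : ℕ) (Z : Finset (Fin n)), A ⊆ Z → Z ⊆ B →
      q' ≤ (((Lv G (γ * M) j).filter (fun x => x ⊆ Z)).card : ℝ) → A.card + (j+1) * lam ≤ Z.card := by
  have hq'0 : 0 < q' := lt_of_lt_of_le (by positivity) ha
  intro j
  induction j with
  | zero =>
    intro Z hAZ hZB h
    have := card_between ((Lv G (γ * M) 0).filter (fun x => x ⊆ Z)) A Z hAZ lam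
      (fun x hx => ⟨(hAB x (Lv_sub _ _ _ (Finset.mem_filter.1 hx).1)).1, (Finset.mem_filter.1 hx).2⟩) (ha.trans h)
    omega
  | succ j ih =>
    intro Z hAZ hZB h
    set S := (Lv G (γ * M) (j+1)).filter (fun x => x ⊆ Z) with hS
    set Y := Lv G (γ * M) j with hYdef
    have hSG : ∀ x ∈ S, A ⊆ x ∧ x ⊆ Z := fun x hx =>
      ⟨(hAB x (Lv_sub _ _ _ (Finset.mem_filter.1 hx).1)).1, (Finset.mem_filter.1 hx).2⟩
    have hYM : (Y.card : ℝ) ≤ M := le_trans (by exact_mod_cast Finset.card_le_card (Lv_sub _ _ _)) hG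
    have hj := jensen_step S Y (γ * M) M (by positivity) hYM t (by
      intro x hx
      have := (Finset.mem_filter.1 hx).1
      rw [Lv, Finset.mem_filter] at this
      exact this.2)
    set TT := Fintype.piFinset (fun _ : Fin (t+1) => S) with hTT
    have hTc : (TT.card : ℝ) = (S.card : ℝ)^(t+1) := by
      rw [hTT, Fintype.card_piFinset_const]; push_cast; rfl
    have hTW : ∀ T ∈ TT, A ⊆ Finset.univ.inf T ∧ Finset.univ.inf T ⊆ Z := by
      intro T hT
      rw [hTT, Fintype.mem_piFinset] at hT
      refine ⟨?_, ?_⟩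
      · change _ ≤ _; rw [Finset.le_inf_iff]
        exact fun i _ => (hSG _ (hT i)).1
      · have : Finset.univ.inf T ≤ T 0 := Finset.inf_le (Finset.mem_univ _)
        exact le_trans this (hSG _ (hT 0)).2
    by_contra hcon
    have key : ∀ T ∈ TT, ¬ (((S.filter (fun x => Finset.univ.inf T ⊆ x)).card : ℝ) < 2^lam) →
        ((Y.filter (fun y => y ⊆ Finset.univ.inf T)).card : ℝ) ≤ q' := by
      intro T hT hgood
      by_contra hlt
      push Not at hlt hgood
      obtain ⟨h1, h2⟩ := hTW T hT
      have i1 := ih _ h1 (h2.trans hZB) hlt.le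
      have i2 := card_between _ (Finset.univ.inf T) Z h2 lam (fun x hx => ⟨(Finset.mem_filter.1 hx).2, (hSG x (Finset.mem_filter.1 hx).1).2⟩) hgood
      apply hcon
      have : (j + 1 + 1) * lam = (j+1) * lam + lam := by ring
      omega
    set bad := TT.filter (fun T => ((S.filter (fun x => Finset.univ.inf T ⊆ x)).card : ℝ) < 2^lam) with hbad
    have hbadc : (bad.card : ℝ) ≤ (2:ℝ)^(B.card - A.card) * ((2:ℝ)^lam)^(t+1) := by
      have hAB' : A ⊆ B := hAZ.trans hZB
      have hmaps : ∀ T ∈ bad, Finset.univ.inf T ∈ Finset.Icc A B := fun T hT => by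
        obtain ⟨h1, h2⟩ := hTW T (Finset.mem_filter.1 hT).1
        exact Finset.mem_Icc.2 ⟨h1, h2.trans hZB⟩
      rw [Finset.card_eq_sum_card_fiberwise hmaps, Nat.cast_sum]
      refine (Finset.sum_le_card_nsmul _ _ (((2:ℝ)^lam)^(t+1)) ?_).trans ?_
      · intro W hW
        by_cases hWc : ((S.filter (fun x => W ⊆ x)).card : ℝ) < 2^lam
        · have : (bad.filter (fun T => Finset.univ.inf T = W)) ⊆ Fintype.piFinset (fun _ : Fin (t+1) => S.filter (fun x => W ⊆ x)) := by
            intro T hT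
            obtain ⟨hT1, hT2⟩ := Finset.mem_filter.1 hT
            have hT3 := (Finset.mem_filter.1 hT1).1
            rw [hTT, Fintype.mem_piFinset] at hT3
            rw [Fintype.mem_piFinset]
            intro i
            refine Finset.mem_filter.2 ⟨hT3 i, ?_⟩
            rw [← hT2]
            exact (Finset.inf_le (Finset.mem_univ i))
          have h3 := Finset.card_le_card this
          rw [Fintype.card_piFinset_const] at h3
          have h4 : ((bad.filter (fun T => Finset.univ.inf T = W)).card : ℝ) ≤ ((S.filter (fun x => W ⊆ x)).card : ℝ)^(t+1) := by
            exact_mod_cast h3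
          exact h4.trans (pow_le_pow_left₀ (by positivity) hWc.le _)
        · have : bad.filter (fun T => Finset.univ.inf T = W) = ∅ := by
            rw [Finset.filter_eq_empty_iff]
            intro T hT hTW'
            apply hWc
            rw [← hTW']
            exact (Finset.mem_filter.1 hT).2
          rw [this]
          simp only [Finset.card_empty, Nat.cast_zero]
          positivity
      · rw [Finset.card_Icc_finset hAB', nsmul_eq_mul]
        push_cast
        exact le_rfl
    have hsum : ∑ T ∈ TT, ((Y.filter (fun y => y ⊆ Finset.univ.inf T)).card : ℝ) ≤ bad.card * M + (S.card:ℝ)^(t+1) * q' := by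
      rw [← Finset.sum_filter_add_sum_filter_not TT (fun T => ((S.filter (fun x => Finset.univ.inf T ⊆ x)).card : ℝ) < 2^lam)]
      refine add_le_add ?_ ?_
      · rw [← nsmul_eq_mul]
        refine Finset.sum_le_card_nsmul _ _ _ fun T _ => ?_
        refine le_trans ?_ hYM
        exact_mod_cast Finset.card_le_card (Finset.filter_subset _ _)
      · rw [← hTc]
        refine (Finset.sum_le_card_nsmul _ _ q' fun T hT => ?_).trans ?_
        · exact key T (Finset.mem_filter.1 hT).1 (Finset.mem_filter.1 hT).2
        · rw [nsmul_eq_mul]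
          have : ((TT.filter (fun T => ¬ ((S.filter (fun x => Finset.univ.inf T ⊆ x)).card : ℝ) < 2^lam)).card : ℝ) ≤ TT.card := by
            exact_mod_cast Finset.card_le_card (Finset.filter_subset _ _)
          gcongr
    have hmain := hj.trans hsum
    have e : ((S.card:ℝ) * (γ * M))^(t+1) / M^t = (S.card:ℝ)^(t+1) * γ^(t+1) * M := by
      rw [mul_pow, mul_pow, pow_succ M t]
      field_simp
    rw [e] at hmain
    have hS1 : q'^(t+1) ≤ (S.card:ℝ)^(t+1) := pow_le_pow_left₀ hq'0.le h _
    have hSpos : 0 < (S.card:ℝ)^(t+1) := lt_of_lt_of_le (by positivity) hS1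
    have hγp : 0 < γ^(t+1) := by positivity
    rw [mul_pow] at hb
    -- bad ≤ (γ q')^(t+1)/2 ≤ γ^(t+1) S^(t+1) / 2
    have hb2 : 4 * (bad.card:ℝ) ≤ γ^(t+1) * (S.card:ℝ)^(t+1) := by
      have := mul_le_mul_of_nonneg_left hS1 hγp.le
      linarith
    have hSg : 0 < γ^(t+1) * (S.card:ℝ)^(t+1) := by positivity
    have hp : 0 < γ^(t+1) * (S.card:ℝ)^(t+1) * M := by positivity
    have hb3 := mul_le_mul_of_nonneg_right hb2 hM.le
    rw [hq'] at hmain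
    linarith

def Inc (G : Finset (Finset (Fin n))) : Finset (Finset (Fin n) × Finset (Fin n)) :=
  (G ×ˢ G).filter (fun p => ¬ (p.1 ⊆ p.2 ∨ p.2 ⊆ p.1))

lemma sum_Inc {ι : Type*} [DecidableEq ι] (s : Finset ι) (P : ι → Finset (Finset (Fin n)))
    (G : Finset (Finset (Fin n))) (hP : ∀ i ∈ s, P i ⊆ G)
    (hd : ∀ i ∈ s, ∀ j ∈ s, i ≠ j → Disjoint (P i) (P j)) :
    ∑ i ∈ s, (Inc (P i)).card ≤ (Inc G).card := by
  rw [← Finset.card_biUnion]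
  · apply Finset.card_le_card
    intro p hp
    obtain ⟨i, hi, hp⟩ := Finset.mem_biUnion.1 hp
    rw [Inc, Finset.mem_filter, Finset.mem_product] at hp ⊢
    exact ⟨⟨hP i hi hp.1.1, hP i hi hp.1.2⟩, hp.2⟩
  · intro i hi j hj hij
    rw [Function.onFun, Finset.disjoint_left]
    intro p hp hp'
    rw [Inc, Finset.mem_filter, Finset.mem_product] at hp hp'
    exact Finset.disjoint_left.1 (hd i hi j hj hij) hp.1.1 hp'.1.1

lemma Inc_lower (P : Finset (Finset (Fin n))) (q : ℝ)
    (h : ∀ y ∈ P, ((P.filter (fun x => x ⊆ y)).card : ℝ) ≤ q) :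
    (P.card:ℝ)^2 - 2 * q * P.card ≤ (Inc P).card := by
  have h1 := Finset.card_filter_add_card_filter_not (s := P ×ˢ P) (fun p : Finset (Fin n) × Finset (Fin n) => (p.1 ⊆ p.2 ∨ p.2 ⊆ p.1))
  rw [Finset.filter_or, Finset.card_product] at h1
  have h2 := Finset.card_union_le ((P ×ˢ P).filter (fun p => p.1 ⊆ p.2)) ((P ×ˢ P).filter (fun p => p.2 ⊆ p.1))
  have h3 : (((P ×ˢ P).filter (fun p => p.1 ⊆ p.2)).card : ℝ) ≤ q * P.card := by
    have e : ((P ×ˢ P).filter (fun p => p.1 ⊆ p.2)).card = ∑ y ∈ P, (P.filter (fun x => x ⊆ y)).card := by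
      simp only [Finset.card_filter]
      rw [Finset.sum_product_right]
    rw [e, Nat.cast_sum]
    refine (Finset.sum_le_card_nsmul _ _ q h).trans ?_
    rw [nsmul_eq_mul, mul_comm]
  have h4 : (((P ×ˢ P).filter (fun p => p.2 ⊆ p.1)).card : ℝ) ≤ q * P.card := by
    have e : ((P ×ˢ P).filter (fun p => p.2 ⊆ p.1)).card = ∑ y ∈ P, (P.filter (fun x => x ⊆ y)).card := by
      simp only [Finset.card_filter]
      rw [Finset.sum_product]
    rw [e, Nat.cast_sum]
    refine (Finset.sum_le_card_nsmul _ _ q h).trans ?_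
    rw [nsmul_eq_mul, mul_comm]
  change _ + (Inc P).card = _ at h1
  have h1' : (((P ×ˢ P).filter (fun p => p.1 ⊆ p.2) ∪ (P ×ˢ P).filter (fun p => p.2 ⊆ p.1)).card : ℝ) + (Inc P).card = P.card * P.card := by
    exact_mod_cast h1
  have h2' : (((P ×ˢ P).filter (fun p => p.1 ⊆ p.2) ∪ (P ×ˢ P).filter (fun p => p.2 ⊆ p.1)).card : ℝ) ≤
    ((P ×ˢ P).filter (fun p => p.1 ⊆ p.2)).card + ((P ×ˢ P).filter (fun p => p.2 ⊆ p.1)).card := by exact_mod_cast h2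
  nlinarith

lemma local_small (G : Finset (Finset (Fin n))) (A B : Finset (Fin n)) (hAB : ∀ x ∈ G, A ⊆ x ∧ x ⊆ B)
    (hABs : A ⊆ B)
    (M γ q' : ℝ) (hγ : 0 < γ) (hγ1 : γ ≤ 1) (hM : 0 < M) (hG : (G.card : ℝ) ≤ M) (lam t : ℕ) (hlam : 0 < lam)
    (hq' : q' = γ^(t+1) * M / 2)
    (ha : (2:ℝ)^lam ≤ q')
    (hb : 4 * (2:ℝ)^(B.card - A.card) * ((2:ℝ)^lam)^(t+1) ≤ (γ * q')^(t+1)) (l : ℝ) (hl : 0 ≤ l) :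
    2 * lam * l * (G.card - γ * M) - ((B.card - A.card : ℕ) : ℝ) * lam * l^2 - 2 * (γ * M) * G.card ≤ (Inc G).card := by
  set d := B.card - A.card with hd
  set k := d / lam with hk
  set q := γ * M with hq
  have hq'q : q' ≤ q := by
    have : γ^(t+1) ≤ γ := by
      rw [pow_succ]; exact mul_le_of_le_one_left hγ.le (pow_le_one₀ hγ.le hγ1)
    rw [hq', hq]
    have := mul_le_mul_of_nonneg_right this hM.le
    have : 0 < γ * M := by positivity
    linarith
  have htop : ((Lv G q k).card : ℝ) < q := by
    by_contra hcon
    push Not at hcon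
    have e : (Lv G q k).filter (fun x => x ⊆ B) = Lv G q k := by
      rw [Finset.filter_eq_self]
      exact fun x hx => (hAB x (Lv_sub _ _ _ hx)).2
    have := climb G A B hAB M γ q' hγ hM hG lam t hq' ha hb k B hABs subset_rfl (by rw [← hq, e]; linarith)
    have : d < (k+1) * lam := by rw [mul_comm]; exact Nat.lt_mul_div_succ d hlam
    omega
  set P : ℕ → Finset (Finset (Fin n)) := fun j => Lv G q j \ Lv G q (j+1) with hP
  have hmono : Antitone (Lv G q) := antitone_nat_of_succ_le (fun j => Lv_anti G q j)
  have hPc : ∀ k, ∑ j ∈ Finset.range k, ((P j).card : ℝ) = G.card - (Lv G q k).card := by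
    intro k
    induction k with
    | zero => simp [Lv]
    | succ k ih =>
      rw [Finset.sum_range_succ, ih, hP]
      have := Finset.card_sdiff_add_card_eq_card (Lv_anti G q k)
      have : ((Lv G q k \ Lv G q (k+1)).card : ℝ) + (Lv G q (k+1)).card = (Lv G q k).card := by exact_mod_cast this
      simp only
      linarith
  have hs := sum_Inc (Finset.range k) P G (fun i _ => Finset.sdiff_subset.trans (Lv_sub _ _ _)) (by
    have aux : ∀ i j, i < j → Disjoint (P i) (P j) := by
      intro i j hij
      rw [Finset.disjoint_left]
      intro x hx hx'
      rw [hP] at hx hx'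
      exact (Finset.mem_sdiff.1 hx).2 (hmono (Nat.succ_le_of_lt hij) (Finset.mem_sdiff.1 hx').1)
    intro i _ j _ hij
    rcases lt_or_gt_of_ne hij with h | h
    · exact aux i j h
    · exact (aux j i h).symm)
  have hs' : ∑ j ∈ Finset.range k, ((Inc (P j)).card : ℝ) ≤ (Inc G).card := by exact_mod_cast hs
  have hlow : ∀ j, 2 * (lam * l) * ((P j).card : ℝ) - (lam*l)^2 - 2 * q * (P j).card ≤ (Inc (P j)).card := by
    intro j
    have := Inc_lower (P j) q (by
      intro y hy
      rw [hP] at hy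
      obtain ⟨h1, h2⟩ := Finset.mem_sdiff.1 hy
      rw [Lv, Finset.mem_filter] at h2
      push Not at h2
      refine le_trans ?_ (h2 (Lv_sub _ _ _ h1)).le
      exact_mod_cast Finset.card_le_card (Finset.filter_subset_filter _ Finset.sdiff_subset))
    nlinarith [sq_nonneg ((P j).card - lam * l : ℝ)]
  have hs2 : ∑ j ∈ Finset.range k, (2 * (lam * l) * ((P j).card : ℝ) - (lam*l)^2 - 2 * q * ((P j).card : ℝ)) ≤ ((Inc G).card : ℝ) :=
    (Finset.sum_le_sum fun j _ => hlow j).trans hs'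
  rw [Finset.sum_sub_distrib, Finset.sum_sub_distrib, ← Finset.mul_sum, ← Finset.mul_sum, hPc, Finset.sum_const, Finset.card_range, nsmul_eq_mul] at hs2
  have hkd : (k:ℝ) * lam ≤ d := by exact_mod_cast Nat.div_mul_le_self d lam
  have hqpos : 0 < q := by positivity
  have h1 : (k:ℝ) * (lam * l)^2 ≤ d * lam * l^2 := by
    have : (0:ℝ) ≤ lam * l^2 := by positivity
    nlinarith
  have h2 : 2 * (lam * l) * q ≥ 2 * (lam * l) * ((Lv G q k).card : ℝ) := by
    have : 0 ≤ 2 * (lam * l) := by positivity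
    exact mul_le_mul_of_nonneg_left htop.le this
  have h3 : 0 ≤ 2 * q * ((Lv G q k).card : ℝ) := by positivity
  linarith

lemma local_all (G : Finset (Finset (Fin n))) (A B : Finset (Fin n)) (hAB : ∀ x ∈ G, A ⊆ x ∧ x ⊆ B)
    (hABs : A ⊆ B)
    (M γ q' : ℝ) (hγ : 0 < γ) (hγ1 : γ ≤ 1) (hM : 0 < M) (hG : (G.card : ℝ) ≤ M) (lam t : ℕ) (hlam : 0 < lam)
    (hq' : q' = γ^(t+1) * M / 2)
    (ha : (2:ℝ)^lam ≤ q') (l : ℝ) (hl : 0 ≤ l)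
    (hb : ∀ d : ℕ, d * l ≤ 2 * M → 4 * (2:ℝ)^d * ((2:ℝ)^lam)^(t+1) ≤ (γ * q')^(t+1)) :
    2 * lam * l * (G.card - γ * M) - ((B.card - A.card : ℕ) : ℝ) * lam * l^2 - 2 * (γ * M) * G.card ≤ (Inc G).card := by
  by_cases h : ((B.card - A.card : ℕ) : ℝ) * l ≤ 2 * M
  · exact local_small G A B hAB hABs M γ q' hγ hγ1 hM hG lam t hlam hq' ha (hb _ h) l hl
  · push Not at h
    have h1 : (0:ℝ) ≤ lam * l := by positivity
    have h2 : 2 * (G.card - γ * M) ≤ ((B.card - A.card : ℕ) : ℝ) * l := by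
      have : 0 < γ * M := by positivity
      linarith
    have h3 := mul_le_mul_of_nonneg_left h2 h1
    have h4 : 0 ≤ 2 * (γ * M) * (G.card:ℝ) := by positivity
    have h5 : (0:ℝ) ≤ (Inc G).card := by positivity
    nlinarith

def pos (F : Finset (Finset (Fin n))) (x : Finset (Fin n)) : ℕ :=
  (F.filter (fun y => toColex y < toColex x)).card

lemma pos_mono (F : Finset (Finset (Fin n))) {x y : Finset (Fin n)} (h : toColex x ≤ toColex y) :
    pos F x ≤ pos F y :=
  Finset.card_le_card (Finset.monotone_filter_right _ fun _ _ hz => lt_of_lt_of_le hz h)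

lemma pos_strict (F : Finset (Finset (Fin n))) {x y : Finset (Fin n)} (hx : x ∈ F) (h : toColex x < toColex y) :
    pos F x < pos F y := by
  apply Finset.card_lt_card
  rw [Finset.ssubset_iff_of_subset (Finset.monotone_filter_right _ fun _ _ hz => lt_trans hz h)]
  exact ⟨x, Finset.mem_filter.2 ⟨hx, h⟩, fun h' => lt_irrefl _ (Finset.mem_filter.1 h').2⟩

lemma pos_inj (F : Finset (Finset (Fin n))) : Set.InjOn (pos F) (F : Set (Finset (Fin n))) := by
  intro x hx y hy h
  rcases lt_trichotomy (toColex x) (toColex y) with h1 | h1 | h1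
  · exact absurd h (pos_strict F hx h1).ne
  · exact toColex_inj.1 h1
  · exact absurd h (pos_strict F hy h1).ne'

lemma pos_lt (F : Finset (Finset (Fin n))) {x : Finset (Fin n)} (hx : x ∈ F) : pos F x < F.card := by
  apply Finset.card_lt_card
  rw [Finset.ssubset_iff_of_subset (Finset.filter_subset _ _)]
  exact ⟨x, hx, fun h' => lt_irrefl _ (Finset.mem_filter.1 h').2⟩

lemma pos_window (F : Finset (Finset (Fin n))) (g : ℕ)
    (hdeg : ∀ x ∈ F, 2 * (F.filter (fun y => ¬ (x ⊆ y ∨ y ⊆ x))).card ≤ g) {x y : Finset (Fin n)} (hx : x ∈ F) (hy : y ∈ F)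
    (hxy : pos F x < pos F y) (v : Fin n) (hv : v ∈ x) (hv' : v ∉ y) : pos F y ≤ pos F x + g := by
  have h1 : ¬ x ⊆ y := fun h => hv' (h hv)
  have hsub : F.filter (fun z => toColex z < toColex y) ⊆ F.filter (fun z => toColex z < toColex x) ∪
     (F.filter (fun z => ¬ (x ⊆ z ∨ z ⊆ x)) ∪ F.filter (fun z => ¬ (y ⊆ z ∨ z ⊆ y))) := by
    intro z hz
    obtain ⟨hz1, hz2⟩ := Finset.mem_filter.1 hz
    simp only [Finset.mem_union, Finset.mem_filter]
    by_contra hcon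
    have c1 : ¬ (toColex z < toColex x) := fun h => hcon (Or.inl ⟨hz1, h⟩)
    have c2 : ¬ x ⊆ z → ¬ ¬ z ⊆ x := fun h h' => hcon (Or.inr (Or.inl ⟨hz1, fun h2 => h2.elim h h'⟩))
    have c3 : ¬ y ⊆ z → ¬ ¬ z ⊆ y := fun h h' => hcon (Or.inr (Or.inr ⟨hz1, fun h2 => h2.elim h h'⟩))
    have c3' : z ⊆ y := by
      by_contra hzy
      exact c3 (fun hyz => absurd (Finset.Colex.toColex_le_toColex_of_subset hyz) (not_le.2 hz2)) hzy
    have c2' : z ⊆ x := by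
      by_contra hzx
      exact c2 (fun hxz => h1 (hxz.trans c3')) hzx
    have c4 := Finset.Colex.toColex_le_toColex_of_subset c2'
    have c5 : toColex z = toColex x := le_antisymm c4 (not_lt.1 c1)
    rw [toColex_inj] at c5
    exact h1 (c5 ▸ c3')
  have h2 := (Finset.card_le_card hsub).trans (Finset.card_union_le _ _)
  have h3 := Finset.card_union_le (F.filter (fun z => ¬ (x ⊆ z ∨ z ⊆ x))) (F.filter (fun z => ¬ (y ⊆ z ∨ z ⊆ y)))
  have h4 := hdeg x hx
  have h5 := hdeg y hy
  unfold pos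
  omega

def Blk (F : Finset (Finset (Fin n))) (g K b : ℕ) : Finset (Finset (Fin n)) :=
  F.filter (fun x => pos F x / g / K = b ∧ pos F x / g % K ≠ K - 1)

lemma Blk_card (F : Finset (Finset (Fin n))) (g K b : ℕ) (hg : 0 < g) (hK : 0 < K) : (Blk F g K b).card ≤ g * K := by
  have : (Blk F g K b).card ≤ (Finset.Ico (b * (g * K)) ((b+1) * (g*K))).card := by
    apply Finset.card_le_card_of_injOn (pos F)
    · intro x hx
      obtain ⟨h1, h2, h3⟩ := Finset.mem_filter.1 (Finset.mem_coe.1 hx)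
      rw [Nat.div_div_eq_div_mul] at h2
      have hgK : 0 < g * K := by positivity
      rw [Finset.mem_coe, Finset.mem_Ico, ← Nat.le_div_iff_mul_le hgK, ← Nat.div_lt_iff_lt_mul hgK]
      omega
    · exact (pos_inj F).mono (fun x hx => (Finset.mem_filter.1 (Finset.mem_coe.1 hx)).1)
  rw [Nat.card_Ico] at this
  have e : (b+1) * (g*K) - b * (g*K) = g * K := by rw [add_mul, one_mul]; omega
  omega

lemma gap_card (F : Finset (Finset (Fin n))) (g K : ℕ) (hg : 0 < g) (hK : 0 < K) :
    K * (F.filter (fun x => pos F x / g % K = K - 1)).card ≤ F.card := by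
  rw [mul_comm, ← Finset.card_range K, ← Finset.card_product, Finset.card_range K]
  conv_rhs => rw [← Finset.card_range F.card]
  have hdiv : ∀ p c, c < K → p / g % K = K - 1 → c * g ≤ p ∧ (p - c * g) / g % K = K - 1 - c := by
    intro p c hc hp
    have h0 : K - 1 ≤ p / g := hp ▸ Nat.mod_le _ _
    have h1 : c * g ≤ p := (Nat.le_div_iff_mul_le hg).1 (by omega)
    refine ⟨h1, ?_⟩
    rw [mul_comm, Nat.sub_mul_div]
    have h2 := Nat.div_add_mod (p/g) K
    rw [hp] at h2
    have : p / g - c = (K - 1 - c) + K * (p / g / K) := by omega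
    rw [this, Nat.add_mul_mod_self_left, Nat.mod_eq_of_lt (by omega)]
  apply Finset.card_le_card_of_injOn (fun z => pos F z.1 - z.2 * g)
  · intro z hz
    obtain ⟨h1, h2⟩ := Finset.mem_product.1 (Finset.mem_coe.1 hz)
    have := pos_lt F (Finset.mem_filter.1 h1).1
    rw [Finset.mem_coe, Finset.mem_range]
    exact lt_of_le_of_lt (Nat.sub_le _ _) this
  · intro z hz w hw h
    obtain ⟨h1, h2⟩ := Finset.mem_product.1 (Finset.mem_coe.1 hz)
    obtain ⟨h1', h2'⟩ := Finset.mem_product.1 (Finset.mem_coe.1 hw)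
    obtain ⟨h1, h3⟩ := Finset.mem_filter.1 h1
    obtain ⟨h1', h3'⟩ := Finset.mem_filter.1 h1'
    rw [Finset.mem_range] at h2 h2'
    simp only at h
    obtain ⟨a1, a2⟩ := hdiv _ _ h2 h3
    obtain ⟨b1, b2⟩ := hdiv _ _ h2' h3'
    rw [h, b2] at a2
    have e : z.2 = w.2 := by omega
    have e2 : pos F z.1 = pos F w.1 := by rw [e] at h a1; omega
    exact Prod.ext (pos_inj F h1 h1' e2) e

lemma Blk_far (F : Finset (Finset (Fin n))) (g K b b' : ℕ) (hg : 0 < g) (hK : 0 < K) (hbb : b < b')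
    {x y : Finset (Fin n)} (hx : x ∈ Blk F g K b) (hy : y ∈ Blk F g K b') : pos F x + g < pos F y := by
  obtain ⟨_, h2, h3⟩ := Finset.mem_filter.1 hx
  obtain ⟨_, h2', h3'⟩ := Finset.mem_filter.1 hy
  have h4 := Nat.div_add_mod (pos F x / g) K
  have h5 := Nat.div_add_mod (pos F y / g) K
  have h6 := Nat.mod_lt (pos F x / g) hK
  rw [h2] at h4
  rw [h2'] at h5
  have h7 : K * (b+1) ≤ K * b' := Nat.mul_le_mul_left _ hbb
  rw [mul_add, mul_one] at h7
  have h8 : pos F x / g + 2 ≤ pos F y / g := by omega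
  have h9 := (Nat.le_div_iff_mul_le hg).1 h8
  have h10 := Nat.lt_div_mul_add (a := pos F x) hg
  rw [add_mul] at h9
  omega

lemma glob (F : Finset (Finset (Fin n))) (g K : ℕ) (hg : 0 < g) (hK : 0 < K)
    (hdeg : ∀ x ∈ F, 2 * (F.filter (fun y => ¬ (x ⊆ y ∨ y ⊆ x))).card ≤ g)
    (M γ q' : ℝ) (hMdef : M = g * K) (hγ : 0 < γ) (hγ1 : γ ≤ 1) (lam t : ℕ) (hlam : 0 < lam)
    (hq' : q' = γ^(t+1) * M / 2)
    (ha : (2:ℝ)^lam ≤ q') (l : ℝ) (hl : 0 ≤ l)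
    (hb : ∀ d : ℕ, d * l ≤ 2 * M → 4 * (2:ℝ)^d * ((2:ℝ)^lam)^(t+1) ≤ (γ * q')^(t+1)) :
    2 * lam * l * ((F.card - F.card / K) - γ * (F.card + M)) - n * lam * l^2 - 2 * (γ * M) * F.card ≤ (Inc F).card := by
  have hM : 0 < M := by rw [hMdef]; positivity
  set s := (Finset.range (F.card / (g * K) + 1)).filter (fun b => (Blk F g K b).Nonempty) with hs
  have hsc : (s.card : ℝ) * M ≤ F.card + M := by
    have h1 : s.card ≤ F.card / (g*K) + 1 := (Finset.card_le_card (Finset.filter_subset _ _)).trans (by simp)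
    have h2 : s.card * (g*K) ≤ F.card + g * K := by
      calc s.card * (g*K) ≤ (F.card / (g*K) + 1) * (g*K) := Nat.mul_le_mul_right _ h1
        _ = F.card / (g*K) * (g*K) + g*K := by ring
        _ ≤ _ := by have := Nat.div_mul_le_self F.card (g*K); omega
    rw [hMdef]; exact_mod_cast h2
  have hblkdisj : ∀ i j, i ≠ j → Disjoint (Blk F g K i) (Blk F g K j) := by
    intro i j hij
    rw [Finset.disjoint_left]
    intro x hx hx'
    exact hij ((Finset.mem_filter.1 hx).2.1.symm.trans (Finset.mem_filter.1 hx').2.1)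
  have hsum := sum_Inc s (Blk F g K) F (fun i _ => Finset.filter_subset _ _) (fun i _ j _ hij => hblkdisj i j hij)
  have hsum' : ∑ b ∈ s, ((Inc (Blk F g K b)).card : ℝ) ≤ (Inc F).card := by exact_mod_cast hsum
  set A : ℕ → Finset (Fin n) := fun b => (Blk F g K b).inf id with hA
  set B : ℕ → Finset (Fin n) := fun b => (Blk F g K b).sup id with hB
  have hAB : ∀ b, ∀ x ∈ Blk F g K b, A b ⊆ x ∧ x ⊆ B b := fun b x hx =>
    ⟨Finset.inf_le (f := id) hx, Finset.le_sup (f := id) hx⟩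
  have hABs : ∀ b ∈ s, A b ⊆ B b := by
    intro b hb'
    obtain ⟨x, hx⟩ := (Finset.mem_filter.1 hb').2
    exact (hAB b x hx).1.trans (hAB b x hx).2
  have hloc : ∀ b ∈ s, 2 * lam * l * ((Blk F g K b).card - γ * M) - (((B b).card - (A b).card : ℕ) : ℝ) * lam * l^2 - 2 * (γ * M) * ((Blk F g K b).card:ℝ) ≤ ((Inc (Blk F g K b)).card : ℝ) := by
    intro b hbs
    exact local_all _ (A b) (B b) (hAB b) (hABs b hbs) M γ q' hγ hγ1 hM (by
      rw [hMdef]; exact_mod_cast Blk_card F g K b hg hK) lam t hlam hq' ha l hl hb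
  have hdim : ∑ b ∈ s, (((B b).card - (A b).card : ℕ) : ℝ) ≤ n := by
    have e : ∀ b ∈ s, (B b).card - (A b).card = (B b \ A b).card := fun b hbs => (Finset.card_sdiff_of_subset (hABs b hbs)).symm
    rw [← Nat.cast_sum, Finset.sum_congr rfl e, ← Finset.card_biUnion]
    · have := Finset.card_le_univ (s.biUnion fun b => B b \ A b)
      rw [Fintype.card_fin] at this
      exact_mod_cast this
    · have aux : ∀ i j, i < j → Disjoint (B i \ A i) (B j \ A j) := by
        intro i j hij
        rw [Finset.disjoint_left]
        intro v hv hv'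
        have h1 := (Finset.mem_sdiff.1 hv).1
        have h2 := (Finset.mem_sdiff.1 hv').2
        have h3 : ∃ x ∈ Blk F g K i, v ∈ x := by
          rw [hB] at h1
          simpa [Finset.mem_sup] using h1
        have h4 : ∃ y ∈ Blk F g K j, v ∉ y := by
          by_contra hcon
          push Not at hcon
          apply h2
          have : ({v} : Finset (Fin n)) ≤ A j := by
            rw [hA, Finset.le_inf_iff]
            intro y hy
            simpa using hcon y hy
          simpa using this
        obtain ⟨x, hx, hvx⟩ := h3
        obtain ⟨y, hy, hvy⟩ := h4
        have hfar := Blk_far F g K i j hg hK hij hx hy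
        have := pos_window F g hdeg (Finset.mem_filter.1 hx).1 (Finset.mem_filter.1 hy).1 (by omega) v hvx hvy
        omega
      intro i _ j _ hij
      rcases lt_or_gt_of_ne hij with h | h
      · exact aux i j h
      · exact (aux j i h).symm
  have hcov : F.card - F.card / K ≤ ∑ b ∈ s, ((Blk F g K b).card : ℝ) := by
    have h1 := gap_card F g K hg hK
    have h2 := Finset.card_filter_add_card_filter_not (s := F) (fun x => pos F x / g % K = K - 1)
    have h3 : (F.filter (fun x => ¬ pos F x / g % K = K - 1)).card ≤ ∑ b ∈ s, (Blk F g K b).card := by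
      rw [← Finset.card_biUnion (fun i _ j _ hij => hblkdisj i j hij)]
      apply Finset.card_le_card
      intro x hx
      obtain ⟨hx1, hx2⟩ := Finset.mem_filter.1 hx
      have hxb : x ∈ Blk F g K (pos F x / g / K) := Finset.mem_filter.2 ⟨hx1, rfl, hx2⟩
      refine Finset.mem_biUnion.2 ⟨pos F x / g / K, ?_, hxb⟩
      refine Finset.mem_filter.2 ⟨?_, ⟨x, hxb⟩⟩
      rw [Finset.mem_range, Nat.div_div_eq_div_mul]
      exact Nat.lt_succ_of_le (Nat.div_le_div_right (pos_lt F hx1).le)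
    have h1' : ((F.filter (fun x => pos F x / g % K = K - 1)).card : ℝ) ≤ F.card / K := by
      rw [le_div_iff₀ (by exact_mod_cast hK), mul_comm]
      exact_mod_cast h1
    have h2' : ((F.filter (fun x => pos F x / g % K = K - 1)).card : ℝ) + (F.filter (fun x => ¬ pos F x / g % K = K - 1)).card = F.card := by
      exact_mod_cast h2
    have h3' : ((F.filter (fun x => ¬ pos F x / g % K = K - 1)).card : ℝ) ≤ ∑ b ∈ s, ((Blk F g K b).card : ℝ) := by exact_mod_cast h3
    linarith
  have hcov2 : ∑ b ∈ s, ((Blk F g K b).card : ℝ) ≤ F.card := by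
    rw [← Nat.cast_sum, ← Finset.card_biUnion (fun i _ j _ hij => hblkdisj i j hij)]
    exact_mod_cast Finset.card_le_card (Finset.biUnion_subset.2 fun b _ => Finset.filter_subset _ _)
  have hfin := (Finset.sum_le_sum hloc).trans hsum'
  rw [Finset.sum_sub_distrib, Finset.sum_sub_distrib, ← Finset.mul_sum, ← Finset.mul_sum, ← Finset.sum_mul, ← Finset.sum_mul,
    Finset.sum_sub_distrib, Finset.sum_const, nsmul_eq_mul] at hfin
  refine le_trans ?_ hfin
  have k1 : (0:ℝ) ≤ 2 * lam * l := by positivity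
  have k2 : (0:ℝ) ≤ lam * l^2 := by positivity
  have k3 : 0 ≤ 2 * (γ * M) := by positivity
  have m1 : (F.card - F.card / K : ℝ) - γ * (F.card + M) ≤ ∑ b ∈ s, ((Blk F g K b).card : ℝ) - s.card * (γ * M) := by
    have := mul_le_mul_of_nonneg_left hsc hγ.le
    linarith
  have m1' := mul_le_mul_of_nonneg_left m1 k1
  have m2 := mul_le_mul_of_nonneg_right hdim k2
  have m3 := mul_le_mul_of_nonneg_left hcov2 k3
  linarith

end helpers

lemma Inc_le {n : ℕ} (F : Finset (Finset (Fin n))) : ((Inc F).card : ℝ) ≤ 2 * (incompCount F : ℝ) := by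
  set U := (F ×ˢ F).filter (fun p => p.1 ⊂ p.2) with hU
  set V := (F ×ˢ F).filter (fun p => p.2 ⊂ p.1) with hV
  have hUc : compCount F = U.card := rfl
  have hVU : V.card = U.card := by
    apply Finset.card_bij (fun p _ => (p.2, p.1))
    · intro p hp
      rw [hV, Finset.mem_filter, Finset.mem_product] at hp
      rw [hU, Finset.mem_filter, Finset.mem_product]
      exact ⟨⟨hp.1.2, hp.1.1⟩, hp.2⟩
    · intro p _ r _ h
      exact Prod.ext (congrArg Prod.snd h) (congrArg Prod.fst h)
    · intro p hp
      rw [hU, Finset.mem_filter, Finset.mem_product] at hp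
      refine ⟨(p.2, p.1), ?_, rfl⟩
      rw [hV, Finset.mem_filter, Finset.mem_product]
      exact ⟨⟨hp.1.2, hp.1.1⟩, hp.2⟩
  have d1 : Disjoint U V := by
    rw [Finset.disjoint_left]
    intro p hp hp'
    exact lt_asymm (Finset.mem_filter.1 hp).2 (Finset.mem_filter.1 hp').2
  have d2 : Disjoint (Inc F) (U ∪ V) := by
    rw [Finset.disjoint_left]
    intro p hp hp'
    have h1 := (Finset.mem_filter.1 hp).2
    rcases Finset.mem_union.1 hp' with h | h
    · exact h1 (Or.inl (Finset.mem_filter.1 h).2.le)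
    · exact h1 (Or.inr (Finset.mem_filter.1 h).2.le)
  have hsub : Inc F ∪ (U ∪ V) ⊆ F.offDiag := by
    intro p hp
    rw [Finset.mem_offDiag]
    rcases Finset.mem_union.1 hp with h | h
    · obtain ⟨h1, h2⟩ := Finset.mem_filter.1 h
      refine ⟨(Finset.mem_product.1 h1).1, (Finset.mem_product.1 h1).2, fun e => h2 (Or.inl (le_of_eq e))⟩
    · rcases Finset.mem_union.1 h with h | h
      · obtain ⟨h1, h2⟩ := Finset.mem_filter.1 h
        exact ⟨(Finset.mem_product.1 h1).1, (Finset.mem_product.1 h1).2, ne_of_lt h2⟩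
      · obtain ⟨h1, h2⟩ := Finset.mem_filter.1 h
        exact ⟨(Finset.mem_product.1 h1).1, (Finset.mem_product.1 h1).2, (ne_of_lt h2).symm⟩
  have hc := Finset.card_le_card hsub
  rw [Finset.card_union_of_disjoint d2, Finset.card_union_of_disjoint d1, hVU, Finset.offDiag_card] at hc
  have hc' : ((Inc F).card : ℝ) + (U.card + U.card) ≤ F.card * F.card - F.card := by
    have : (Inc F).card + (U.card + U.card) + F.card ≤ F.card * F.card := by
      have := Nat.le_mul_self F.card
      omega
    have : ((Inc F).card : ℝ) + (U.card + U.card) + F.card ≤ F.card * F.card := by exact_mod_cast this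
    linarith
  have h1 : F.card.choose 2 ≤ incompCount F + U.card := by
    unfold incompCount; rw [hUc]; omega
  have h2 : ((F.card.choose 2 : ℕ) : ℝ) ≤ incompCount F + U.card := by exact_mod_cast h1
  rw [Nat.cast_choose_two] at h2
  linarith

lemma logb_nat_nonneg (l : ℕ) : 0 ≤ Real.logb 2 l := by
  rcases Nat.eq_zero_or_pos l with h | h
  · simp [h]
  · exact Real.logb_nonneg (by norm_num) (by exact_mod_cast h)

lemma num_large (c δ : ℝ) (hc : 0 < c) (hδ : 0 < δ) :
    ∃ l₀ : ℕ, ∀ l ≥ l₀, 2 ≤ l ∧ 1 ≤ δ * Real.logb 2 l ∧ 1 ≤ c * (l:ℝ)^(δ/2) := by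
  have h1 : Filter.Tendsto (fun l : ℕ => δ * Real.logb 2 (l:ℝ)) Filter.atTop Filter.atTop :=
    ((Real.tendsto_logb_atTop (by norm_num)).comp tendsto_natCast_atTop_atTop).const_mul_atTop hδ
  have h2 : Filter.Tendsto (fun l : ℕ => c * (l:ℝ)^(δ/2)) Filter.atTop Filter.atTop :=
    ((tendsto_rpow_atTop (by positivity)).comp tendsto_natCast_atTop_atTop).const_mul_atTop hc
  have := ((Filter.eventually_ge_atTop 2).and ((h1.eventually_ge_atTop 1).and (h2.eventually_ge_atTop 1)))
  exact Filter.eventually_atTop.1 this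

lemma num_cond (γ δ M q' D : ℝ) (t lam l : ℕ) (hγ : 0 < γ) (hγ1 : γ ≤ 1)
    (hl2 : 2 ≤ l) (hq' : q' = γ^(t+1) * M / 2) (hlM : (l:ℝ) ≤ M)
    (hc : 1 ≤ γ^(t+2) / 2 * (l:ℝ)^(δ/2)) (hlam : (lam:ℝ) ≤ (1-δ) * Real.logb 2 l)
    (hδ : 0 < δ)
    (hD : 2 * M ≤ D * Real.logb 2 l * l) (ht : 2 * (D + 2) / δ ≤ t) :
    (2:ℝ)^lam ≤ q' ∧ ∀ d : ℕ, (d:ℝ) * l ≤ 2 * M → 4 * (2:ℝ)^d * ((2:ℝ)^lam)^(t+1) ≤ (γ * q')^(t+1) := by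
  have hl0 : (0:ℝ) < l := by positivity
  have hl1 : (1:ℝ) ≤ l := by exact_mod_cast (by omega : 1 ≤ l)
  have h2l : ∀ x : ℝ, (2:ℝ)^(x * Real.logb 2 l) = (l:ℝ)^x := by
    intro x
    rw [mul_comm, Real.rpow_mul (by norm_num), Real.rpow_logb (by norm_num) (by norm_num) hl0]
  have p1 : (2:ℝ)^lam ≤ (l:ℝ)^(1-δ) := by
    rw [← h2l, ← Real.rpow_natCast]
    exact Real.rpow_le_rpow_of_exponent_le (by norm_num) hlam
  have p2 : (2:ℝ)^lam * (l:ℝ)^(δ/2) ≤ γ * q' := by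
    have e1 : (l:ℝ)^(1-δ) * (l:ℝ)^(δ/2) * (l:ℝ)^(δ/2) = l := by
      rw [← Real.rpow_add hl0, ← Real.rpow_add hl0]
      ring_nf
      exact Real.rpow_one _
    have pp : (0:ℝ) < (l:ℝ)^(δ/2) := by positivity
    calc (2:ℝ)^lam * (l:ℝ)^(δ/2) ≤ (l:ℝ)^(1-δ) * (l:ℝ)^(δ/2) := by gcongr
      _ ≤ (l:ℝ)^(1-δ) * (l:ℝ)^(δ/2) * (γ^(t+2) / 2 * (l:ℝ)^(δ/2)) := le_mul_of_one_le_right (by positivity) hc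
      _ = γ^(t+2) / 2 * ((l:ℝ)^(1-δ) * (l:ℝ)^(δ/2) * (l:ℝ)^(δ/2)) := by ring
      _ = γ^(t+2) / 2 * l := by rw [e1]
      _ ≤ γ^(t+2) / 2 * M := by gcongr
      _ = γ * q' := by rw [hq']; ring
  have pone : (1:ℝ) ≤ (l:ℝ)^(δ/2) := Real.one_le_rpow hl1 (by positivity)
  have hq0 : 0 ≤ q' := by
    have : 0 < γ * q' := lt_of_lt_of_le (by positivity) p2
    exact (pos_of_mul_pos_right this hγ.le).le
  refine ⟨?_, ?_⟩
  · calc (2:ℝ)^lam ≤ (2:ℝ)^lam * (l:ℝ)^(δ/2) := le_mul_of_one_le_right (by positivity) pone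
      _ ≤ γ * q' := p2
      _ ≤ q' := mul_le_of_le_one_left hq0 hγ1
  · intro d hd
    have hd' : (d:ℝ) ≤ D * Real.logb 2 l := le_of_mul_le_mul_right (hd.trans hD) hl0
    have q1 : (2:ℝ)^d ≤ (l:ℝ)^D := by
      rw [← h2l, ← Real.rpow_natCast]
      exact Real.rpow_le_rpow_of_exponent_le (by norm_num) hd'
    have q2 : (4:ℝ) ≤ (l:ℝ)^(2:ℝ) := by
      have : (2:ℝ) ≤ l := by exact_mod_cast hl2
      rw [Real.rpow_two]; nlinarith
    have q3 : 4 * (2:ℝ)^d ≤ ((l:ℝ)^(δ/2))^(t+1) := by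
      calc 4 * (2:ℝ)^d ≤ (l:ℝ)^(2:ℝ) * (l:ℝ)^D := by gcongr
        _ = (l:ℝ)^(2 + D) := by rw [Real.rpow_add hl0]
        _ ≤ (l:ℝ)^((δ/2) * ((t+1 : ℕ):ℝ)) := by
          apply Real.rpow_le_rpow_of_exponent_le hl1
          rw [div_le_iff₀ hδ] at ht
          push_cast
          nlinarith
        _ = _ := by rw [Real.rpow_mul hl0.le, Real.rpow_natCast]
    calc 4 * (2:ℝ)^d * ((2:ℝ)^lam)^(t+1) ≤ ((l:ℝ)^(δ/2))^(t+1) * ((2:ℝ)^lam)^(t+1) := by gcongr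
      _ = ((2:ℝ)^lam * (l:ℝ)^(δ/2))^(t+1) := by rw [mul_pow]; ring
      _ ≤ _ := pow_le_pow_left₀ (by positivity) p2 _

set_option maxHeartbeats 1000000 in
lemma main_core (ε : ℝ) (hε : 0 < ε) (hε2 : ε < 1/2) :
    ∃ ℓ₀ : ℕ, ∀ ℓ ≥ ℓ₀, ∀ n ≥ 1,
      ∀ ℱ : Finset (Finset (Fin n)), ℱ.card = n * ℓ →
        (∀ F ∈ ℱ, ((ℱ.filter (fun G => ¬(F ⊆ G ∨ G ⊆ F))).card : ℝ) ≤ 4 * ℓ * Real.logb 2 ℓ) →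
        (1 / 2 - ε) * n * (ℓ : ℝ) ^ 2 * Real.logb 2 ℓ ≤ (incompCount ℱ : ℝ) := by
  set K := ⌈4/ε⌉₊ with hKdef
  have hK4 : 4/ε ≤ K := Nat.le_ceil _
  have hKpos' : (0:ℝ) < K := lt_of_lt_of_le (by positivity) hK4
  have hKpos : 0 < K := by exact_mod_cast hKpos'
  have hK1 : (1:ℝ) ≤ K := by exact_mod_cast hKpos
  set γ := ε / (200 * K) with hγdef
  have hγ : 0 < γ := by positivity
  have hγK : γ * K = ε / 200 := by rw [hγdef]; field_simp
  have hγε : γ ≤ ε / 200 := by nlinarith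
  have hγ1 : γ ≤ 1 := by linarith
  set δ := ε / 8 with hδdef
  have hδ : 0 < δ := by positivity
  set D : ℝ := 18 * K with hDdef
  set t := ⌈2 * (D + 2) / δ⌉₊ with htdef
  have ht : 2 * (D + 2) / δ ≤ t := Nat.le_ceil _
  obtain ⟨ℓ₀, hℓ₀⟩ := num_large (γ^(t+2)/2) δ (by positivity) hδ
  refine ⟨ℓ₀, fun ℓ hℓ n hn F hF hdeg => ?_⟩
  obtain ⟨hl2, hx1, hc⟩ := hℓ₀ ℓ hℓ
  set x := Real.logb 2 ℓ with hx
  have hx16 : 16 ≤ x := by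
    have h1 : δ ≤ 1/16 := by rw [hδdef]; linarith
    by_contra hcon
    push Not at hcon
    nlinarith
  have hl2' : (2:ℝ) ≤ ℓ := by exact_mod_cast hl2
  have hlx : 32 ≤ (ℓ:ℝ) * x := by nlinarith
  set g := ⌈8 * (ℓ * x)⌉₊ with hg
  have hg1 : 8 * (ℓ * x) ≤ g := Nat.le_ceil _
  have hg2 : (g:ℝ) ≤ 9 * (ℓ * x) := by
    have := Nat.ceil_lt_add_one (a := 8 * (ℓ * x)) (by positivity)
    linarith
  have hgpos : 0 < g := by
    have : (0:ℝ) < g := by linarith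
    exact_mod_cast this
  set M : ℝ := g * K with hM
  have hMub : M ≤ 9 * K * (ℓ * x) := by rw [hM]; have := mul_le_mul_of_nonneg_right hg2 hKpos'.le; linarith
  have hlM : (ℓ:ℝ) ≤ M := by
    have h0 : (ℓ:ℝ) * 16 ≤ ℓ * x := mul_le_mul_of_nonneg_left hx16 (by linarith)
    have : (ℓ:ℝ) ≤ g := by linarith
    rw [hM]; exact this.trans (le_mul_of_one_le_right (by positivity) hK1)
  set lam := ⌊(1-δ) * x⌋₊ with hlamdef
  have hδs : δ ≤ 1/16 := by rw [hδdef]; linarith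
  have hlam1 : (lam:ℝ) ≤ (1-δ) * x := Nat.floor_le (mul_nonneg (by linarith) (by linarith))
  have hlam2 : (1 - 2*δ) * x ≤ lam := by
    have := Nat.lt_floor_add_one ((1-δ) * x)
    rw [← hlamdef] at this
    linarith
  have hlampos : 0 < lam := by
    have h0 : 0 ≤ (1/8 - 2*δ) * x := mul_nonneg (by linarith) (by linarith)
    have : (0:ℝ) < lam := by linarith
    exact_mod_cast this
  obtain ⟨na, nb⟩ := num_cond γ δ M (γ^(t+1) * M / 2) D t lam ℓ hγ hγ1 hl2 rfl hlM hc hlam1 hδ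
    (by rw [hDdef]; rw [← hx]; linarith) ht
  have hglob := glob F g K hgpos hKpos (by
    intro y hy
    have h1 := hdeg y hy
    have h2 : ((2 * (F.filter (fun G => ¬(y ⊆ G ∨ G ⊆ y))).card : ℕ) : ℝ) ≤ g := by
      push_cast
      linarith
    exact_mod_cast h2) M γ _ hM hγ hγ1 lam t hlampos rfl na ℓ (by positivity) nb
  have hinc := hglob.trans (Inc_le F)
  have hFc : (F.card : ℝ) = n * ℓ := by rw [hF]; push_cast; rfl
  rw [hFc] at hinc
  have hn1 : (1:ℝ) ≤ n := by exact_mod_cast hn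
  have hxn : x ≤ n := by
    have h1 : F.card ≤ 2^n := by
      have := Finset.card_le_univ F
      simpa using this
    rw [hF] at h1
    have h2 : ℓ ≤ 2^n := le_trans (Nat.le_mul_of_pos_left _ (by omega)) h1
    have h3 : (ℓ:ℝ) ≤ 2^n := by exact_mod_cast h2
    rw [hx, Real.logb_le_iff_le_rpow (by norm_num) (by positivity), Real.rpow_natCast]
    exact h3
  have hlamx : (lam:ℝ) ≤ x := by
    have : 0 ≤ δ * x := by positivity
    linarith
  set X := (n:ℝ) * ℓ^2 * x with hX
  have hX0 : 0 ≤ X := by positivity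
  have hKinv : (1:ℝ) / K ≤ ε / 4 := by
    rw [div_le_iff₀ hKpos']
    rw [div_le_iff₀ hε] at hK4
    linarith
  -- term bounds
  have b1 : 2 * lam * ℓ * (γ * M) ≤ 18 * (ε/200) * X := by
    have s1 : γ * M ≤ 9 * (ε/200) * (ℓ * x) := by
      rw [← hγK]
      have := mul_le_mul_of_nonneg_left hMub hγ.le
      linarith
    have s2 : (lam:ℝ) * ℓ ≤ n * ℓ := by
      have : (lam:ℝ) ≤ n := hlamx.trans hxn
      gcongr
    calc 2 * lam * ℓ * (γ * M) = 2 * ((lam * ℓ) * (γ * M)) := by ring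
      _ ≤ 2 * ((n * ℓ) * (9 * (ε/200) * (ℓ * x))) := by gcongr
      _ = _ := by rw [hX]; ring
  have b2 : 2 * (γ * M) * (n * ℓ) ≤ 18 * (ε/200) * X := by
    have s1 : γ * M ≤ 9 * (ε/200) * (ℓ * x) := by
      rw [← hγK]
      have := mul_le_mul_of_nonneg_left hMub hγ.le
      linarith
    calc 2 * (γ * M) * (n * ℓ) ≤ 2 * (9 * (ε/200) * (ℓ * x)) * (n * ℓ) := by gcongr
      _ = _ := by rw [hX]; ring
  have b3 : (1 - ε) * X ≤ n * lam * (ℓ:ℝ)^2 * (1 - 2 * (1 / K) - 2 * γ) := by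
    have s1 : 1 - (51/100) * ε ≤ 1 - 2 * (1 / (K:ℝ)) - 2 * γ := by linarith
    have s2 : (1 - ε/4) * X ≤ n * lam * (ℓ:ℝ)^2 := by
      have : (1 - 2*δ) = 1 - ε/4 := by rw [hδdef]; ring
      rw [this] at hlam2
      calc (1 - ε/4) * X = n * ((1-ε/4) * x) * (ℓ:ℝ)^2 := by rw [hX]; ring
        _ ≤ _ := by gcongr
    have s3 : 0 ≤ 1 - (51/100) * ε := by linarith
    calc (1 - ε) * X ≤ ((1 - ε/4) * (1 - (51/100) * ε)) * X := by
          apply mul_le_mul_of_nonneg_right _ hX0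
          have : 0 ≤ ε * ε := by positivity
          linarith
      _ = ((1 - ε/4) * X) * (1 - (51/100) * ε) := by ring
      _ ≤ (n * lam * (ℓ:ℝ)^2) * (1 - (51/100) * ε) := by gcongr
      _ ≤ _ := by gcongr
  have e : 2 * lam * (ℓ:ℝ) * ((n * ℓ - n * ℓ / K) - γ * (n * ℓ + M)) - n * lam * (ℓ:ℝ)^2 - 2 * (γ * M) * (n * ℓ)
      = n * lam * (ℓ:ℝ)^2 * (1 - 2 * (1 / K) - 2 * γ) - 2 * lam * ℓ * (γ * M) - 2 * (γ * M) * (n * ℓ) := by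
    ring
  rw [e] at hinc
  have goal' : (1/2 - ε) * n * (ℓ:ℝ)^2 * x = (1/2 - ε) * X := by rw [hX]; ring
  rw [goal']
  have hεX : 0 ≤ ε * X := by positivity
  linarith

theorem stmt9 (ε : ℝ) (hε : 0 < ε) :
    ∃ ℓ₀ n₀ : ℕ, ∀ ℓ ≥ ℓ₀, ∀ n ≥ n₀,
      ∀ ℱ : Finset (Finset (Fin n)), ℱ.card = n * ℓ →
        (∀ F ∈ ℱ, ((ℱ.filter (fun G => ¬(F ⊆ G ∨ G ⊆ F))).card : ℝ) ≤ 4 * ℓ * Real.logb 2 ℓ) →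
        (1 / 2 - ε) * n * (ℓ : ℝ) ^ 2 * Real.logb 2 ℓ ≤ (incompCount ℱ : ℝ) := by
  by_cases hε2 : 1/2 ≤ ε
  · refine ⟨0, 0, fun ℓ _ n _ F _ _ => ?_⟩
    have h1 : 0 ≤ Real.logb 2 ℓ := logb_nat_nonneg ℓ
    have h2 : (0:ℝ) ≤ n * (ℓ:ℝ)^2 * Real.logb 2 ℓ := by positivity
    have h3 : (0:ℝ) ≤ (incompCount F : ℝ) := by positivity
    nlinarith
  push Not at hε2
  obtain ⟨ℓ₀, h⟩ := main_core ε hε hε2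
  exact ⟨ℓ₀, 1, h⟩
end

section
/- For every integer k ≥ 2 and every γ > 0 there is an n₀ = n₀(k,γ) such that for every n ≥ n₀ the following holds: if ℱ is a family of subsets of [n] of size m = |ℱ| ≥ 2^{n/k}, then the number of (k+1)-element subsets of ℱ whose members are pairwise comparable (i.e. form a chain F₁ ⊊ F₂ ⊊ ⋯ ⊊ F_{k+1}) is at most γ·binom(m, k+1). -/
open Finset

theorem aux_jensen {α β : Type*} [DecidableEq α] [DecidableEq β] (X : Finset α) (Y : Finset β)
    (R : α → β → Prop) [∀ a b, Decidable (R a b)] (t : ℕ) :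
    (((X ×ˢ Y).filter (fun p => R p.1 p.2)).card : ℝ) ^ (t + 1) ≤
      (Y.card : ℝ) ^ t * ∑ T ∈ Fintype.piFinset (fun _ : Fin (t + 1) => X),
        ((Y.filter (fun y => ∀ j, R (T j) y)).card : ℝ) := by
  have h1 : (((X ×ˢ Y).filter (fun p => R p.1 p.2)).card : ℝ) =
      ∑ y ∈ Y, ((X.filter (fun x => R x y)).card : ℝ) := by
    rw [Finset.card_filter, Finset.sum_product_right]
    push_cast
    simp
  have h2 : ∑ T ∈ Fintype.piFinset (fun _ : Fin (t + 1) => X),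
        ((Y.filter (fun y => ∀ j, R (T j) y)).card : ℝ) =
      ∑ y ∈ Y, ((X.filter (fun x => R x y)).card : ℝ) ^ (t + 1) := by
    have h3 : ∀ y, (X.filter (fun x => R x y)).card ^ (t + 1) =
        ((Fintype.piFinset (fun _ : Fin (t + 1) => X)).filter (fun T => ∀ j, R (T j) y)).card := by
      intro y
      have : (Fintype.piFinset (fun _ : Fin (t + 1) => X)).filter (fun T => ∀ j, R (T j) y) =
          Fintype.piFinset (fun _ : Fin (t + 1) => X.filter (fun x => R x y)) := by
        ext T
        simp [Fintype.mem_piFinset, forall_and]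
      rw [this, Fintype.card_piFinset]
      simp
    have h4 := Finset.sum_card_bipartiteAbove_eq_sum_card_bipartiteBelow
      (s := Fintype.piFinset (fun _ : Fin (t + 1) => X)) (t := Y)
      (fun (T : Fin (t + 1) → α) y => ∀ j, R (T j) y)
    simp only [Finset.bipartiteAbove, Finset.bipartiteBelow] at h4
    have h5 : ∑ y ∈ Y, (X.filter (fun x => R x y)).card ^ (t + 1) =
      ∑ T ∈ Fintype.piFinset (fun _ : Fin (t + 1) => X),
        (Y.filter (fun y => ∀ j, R (T j) y)).card := by
      rw [h4]
      exact Finset.sum_congr rfl fun y _ => h3 y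
    exact_mod_cast h5.symm
  rw [h1, h2]
  rcases Y.eq_empty_or_nonempty with rfl | hY
  · simp
  have h6 := pow_sum_div_card_le_sum_pow (s := Y)
    (f := fun y => ((X.filter (fun x => R x y)).card : ℝ)) (fun _ _ => by positivity) t
  have hpos : (0 : ℝ) < (Y.card : ℝ) ^ t := by
    have := hY.card_pos
    positivity
  rw [div_le_iff₀ hpos] at h6
  linarith

/-- monotone r-tuples above U -/
def chs {n : ℕ} (ℱ : Finset (Finset (Fin n))) (r : ℕ) (U : Finset (Fin n)) :
    Finset (Fin r → Finset (Fin n)) := by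
  classical
  exact (Fintype.piFinset (fun _ : Fin r => ℱ)).filter (fun c => (∀ i, U ⊆ c i) ∧ Monotone c)

set_option maxHeartbeats 2000000 in
theorem aux_main (t : ℕ) (r : ℕ) : ∀ γ : ℝ, 0 < γ → ∃ C : ℝ, 0 < C ∧
    ∀ (n : ℕ) (ℱ : Finset (Finset (Fin n))) (U : Finset (Fin n)),
      γ * (ℱ.card : ℝ) ^ r ≤ ((chs ℱ r U).card : ℝ) →
      (ℱ.card : ℝ) ^ (r * (t + 1)) * 2 ^ ((t + 1) * U.card) ≤ C * 2 ^ ((t + 1) * n + r * n) := by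
  classical
  induction r with
  | zero =>
    intro γ hγ
    refine ⟨1, one_pos, ?_⟩
    intro n ℱ U _
    have : U.card ≤ n := by simpa using U.card_le_univ
    simp only [zero_mul, pow_zero, one_mul, add_zero]
    exact pow_le_pow_right₀ (by norm_num) (Nat.mul_le_mul_left _ this)
  | succ r ih =>
    intro γ hγ
    set γ' : ℝ := γ ^ (t + 1) / 2 with hγ'
    have hγ'0 : 0 < γ' := by positivity
    obtain ⟨C, hC, hI⟩ := ih γ' hγ'0
    refine ⟨C / γ', by positivity, ?_⟩
    intro n ℱ U hN
    set m : ℝ := (ℱ.card : ℝ) with hm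
    rcases Nat.eq_zero_or_pos ℱ.card with h0 | hmpos
    · have : m = 0 := by simp [hm, h0]
      rw [this, zero_pow (by positivity)]
      simp only [zero_mul]
      positivity
    have hm0 : 0 < m := by simpa [hm] using hmpos
    set Y := Fintype.piFinset (fun _ : Fin r => ℱ) with hY
    have hYc : (Y.card : ℝ) = m ^ r := by simp [hY, hm]
    set R : Finset (Fin n) → (Fin r → Finset (Fin n)) → Prop :=
      fun F c => U ⊆ F ∧ (∀ i, F ⊆ c i) ∧ Monotone c with hR
    have hJ := aux_jensen ℱ Y R t
    set Z := Fintype.piFinset (fun _ : Fin (t + 1) => ℱ) with hZ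
    have hZc : (Z.card : ℝ) = m ^ (t + 1) := by simp [hZ, hm]
    set d : (Fin (t + 1) → Finset (Fin n)) → ℝ :=
      fun T => ((Y.filter (fun y => ∀ j, R (T j) y)).card : ℝ) with hd
    have hA : ((chs ℱ (r + 1) U).card : ℝ) ≤
        (((ℱ ×ˢ Y).filter (fun p => R p.1 p.2)).card : ℝ) := by
      norm_cast
      apply Finset.card_le_card_of_injOn (fun c => (c 0, Fin.tail c))
      · intro c hc
        simp only [chs, Finset.coe_filter, Set.mem_ofPred_eq, Fintype.mem_piFinset] at hc
        obtain ⟨h1, h2, h3⟩ := hc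
        simp only [Finset.coe_filter, Set.mem_ofPred_eq, Finset.mem_product, hY,
          Fintype.mem_piFinset, hR]
        refine ⟨⟨h1 0, fun i => h1 _⟩, h2 0, fun i => h3 (Fin.zero_le _), ?_⟩
        intro a b hab
        exact h3 (Fin.succ_le_succ_iff.2 hab)
      · intro c _ c' _ h
        simp only [Prod.mk.injEq] at h
        rw [← Fin.cons_self_tail c, ← Fin.cons_self_tail c', h.1, h.2]
    have hB : γ ^ (t + 1) * m ^ (r + t + 1) ≤ ∑ T ∈ Z, d T := by
      have h1 : (γ * m ^ (r + 1)) ^ (t + 1) ≤ (m ^ r) ^ t * ∑ T ∈ Z, d T := by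
        rw [← hYc]
        refine le_trans ?_ hJ
        exact pow_le_pow_left₀ (by positivity) (hN.trans hA) _
      have h2 : (γ * m ^ (r + 1)) ^ (t + 1) = (m ^ r) ^ t * (γ ^ (t + 1) * m ^ (r + t + 1)) := by
        ring
      rw [h2] at h1
      exact le_of_mul_le_mul_left h1 (by positivity)
    set G := Z.filter (fun T => γ' * m ^ r ≤ d T) with hG
    have hD : γ' * m ^ (t + 1) ≤ (G.card : ℝ) := by
      have h1 : ∑ T ∈ Z, d T ≤ G.card * m ^ r + m ^ (t + 1) * (γ' * m ^ r) := by
        rw [← Finset.sum_filter_add_sum_filter_not Z (fun T => γ' * m ^ r ≤ d T)]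
        apply add_le_add
        · rw [← nsmul_eq_mul]
          apply Finset.sum_le_card_nsmul
          intro T _
          rw [← hYc]
          simp only [hd]
          exact_mod_cast Finset.card_filter_le _ _
        · calc _ ≤ _ := Finset.sum_le_card_nsmul _ _ (γ' * m ^ r) ?_
            _ ≤ _ := ?_
          · intro T hT
            simp only [Finset.mem_filter, not_le] at hT
            exact hT.2.le
          · rw [nsmul_eq_mul, ← hZc]
            apply mul_le_mul_of_nonneg_right _ (by positivity)
            exact_mod_cast Finset.card_filter_le _ _
      have h2 : m ^ r * (γ' * m ^ (t + 1)) ≤ m ^ r * G.card := by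
        have : γ ^ (t + 1) * m ^ (r + t + 1) = 2 * (m ^ r * (γ' * m ^ (t + 1))) := by
          rw [hγ']; ring
        nlinarith
      exact le_of_mul_le_mul_left h2 (by positivity)
    have hGU : ∀ T ∈ G, (∀ j, U ⊆ T j) ∧
        m ^ (r * (t + 1)) * 2 ^ ((t + 1) * (Finset.univ.sup T).card) ≤
          C * 2 ^ ((t + 1) * n + r * n) := by
      intro T hT
      have hT2 : γ' * m ^ r ≤ d T := (Finset.mem_filter.1 hT).2
      constructor
      · have : 0 < d T := lt_of_lt_of_le (by positivity) hT2
        simp only [hd, Nat.cast_pos, Finset.card_pos] at this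
        obtain ⟨y, hy⟩ := this
        intro j
        exact ((Finset.mem_filter.1 hy).2 j).1
      · apply hI n ℱ
        refine hT2.trans ?_
        simp only [hd]
        norm_cast
        apply Finset.card_le_card
        intro y hy
        obtain ⟨hy1, hy2⟩ := Finset.mem_filter.1 hy
        simp only [chs, Finset.mem_filter]
        refine ⟨hy1, fun i => ?_, (hy2 0).2.2⟩
        exact Finset.sup_le fun j _ => (hy2 j).2.1 i
    set I := G.image (fun T => Finset.univ.sup T) with hIm
    have hE : G.card ≤ ∑ W ∈ I, (2 ^ (W.card - U.card)) ^ (t + 1) := by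
      calc G.card ≤ (I.biUnion fun W => Fintype.piFinset
            (fun _ : Fin (t + 1) => Finset.Icc U W)).card := by
              apply Finset.card_le_card
              intro T hT
              rw [Finset.mem_biUnion]
              refine ⟨_, Finset.mem_image_of_mem _ hT, ?_⟩
              rw [Fintype.mem_piFinset]
              intro j
              rw [Finset.mem_Icc]
              exact ⟨(hGU T hT).1 j, Finset.le_sup (f := T) (Finset.mem_univ j)⟩
        _ ≤ _ := Finset.card_biUnion_le
        _ ≤ _ := by
              apply Finset.sum_le_sum
              intro W hW
              obtain ⟨T, hT, rfl⟩ := Finset.mem_image.1 hW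
              have hs : U ⊆ Finset.univ.sup T :=
                ((hGU T hT).1 0).trans (Finset.le_sup (f := T) (Finset.mem_univ 0))
              rw [Fintype.card_piFinset]
              simp [Finset.card_Icc_finset hs]
    have hF : (G.card : ℝ) * (m ^ (r * (t + 1)) * 2 ^ ((t + 1) * U.card)) ≤
        2 ^ n * (C * 2 ^ ((t + 1) * n + r * n)) := by
      have hE' : (G.card : ℝ) ≤ ∑ W ∈ I, ((2 : ℝ) ^ (W.card - U.card)) ^ (t + 1) := by
        exact_mod_cast hE
      calc _ ≤ (∑ W ∈ I, ((2 : ℝ) ^ (W.card - U.card)) ^ (t + 1)) *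
              (m ^ (r * (t + 1)) * 2 ^ ((t + 1) * U.card)) :=
            mul_le_mul_of_nonneg_right hE' (by positivity)
        _ = ∑ W ∈ I, ((2 : ℝ) ^ (W.card - U.card)) ^ (t + 1) *
              (m ^ (r * (t + 1)) * 2 ^ ((t + 1) * U.card)) := Finset.sum_mul _ _ _
        _ ≤ I.card • (C * 2 ^ ((t + 1) * n + r * n)) := by
            apply Finset.sum_le_card_nsmul
            intro W hW
            obtain ⟨T, hT, rfl⟩ := Finset.mem_image.1 hW
            have hs : U ⊆ Finset.univ.sup T :=
                ((hGU T hT).1 0).trans (Finset.le_sup (f := T) (Finset.mem_univ 0))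
            refine le_trans (le_of_eq ?_) (hGU T hT).2
            obtain ⟨e, he⟩ := Nat.exists_eq_add_of_le (Finset.card_le_card hs)
            rw [he, Nat.add_sub_cancel_left]
            ring
        _ ≤ _ := by
            rw [nsmul_eq_mul]
            apply mul_le_mul_of_nonneg_right _ (by positivity)
            have := I.card_le_univ
            simp only [Fintype.card_finset, Fintype.card_fin] at this
            exact_mod_cast this
    rw [div_mul_eq_mul_div, le_div_iff₀ hγ'0]
    calc _ = γ' * m ^ (t + 1) * (m ^ (r * (t + 1)) * 2 ^ ((t + 1) * U.card)) := by ring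
      _ ≤ _ := mul_le_mul_of_nonneg_right hD (by positivity)
      _ ≤ _ := hF
      _ = _ := by ring

theorem aux_sort {n : ℕ} (r : ℕ) : ∀ S : Finset (Finset (Fin n)), S.card = r →
    (∀ A ∈ S, ∀ B ∈ S, A ⊆ B ∨ B ⊆ A) →
    ∃ c : Fin r → Finset (Fin n), Monotone c ∧ Finset.univ.image c = S := by
  classical
  induction r with
  | zero =>
    intro S hS _
    refine ⟨fun _ => ∅, fun _ _ _ => le_rfl, ?_⟩
    rw [Finset.card_eq_zero.1 hS]; simp
  | succ r ih =>
    intro S hS hc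
    obtain ⟨a, ha, hmin⟩ := Finset.exists_min_image S Finset.card
      (Finset.card_pos.1 (by omega))
    obtain ⟨c, hcm, hci⟩ := ih (S.erase a) (by rw [Finset.card_erase_of_mem ha]; omega)
      (fun A hA B hB => hc A (Finset.mem_of_mem_erase hA) B (Finset.mem_of_mem_erase hB))
    have hle : ∀ i, a ⊆ c i := by
      intro i
      have hi : c i ∈ S := by
        apply Finset.mem_of_mem_erase (a := a)
        rw [← hci]
        exact Finset.mem_image_of_mem _ (Finset.mem_univ _)
      rcases hc a ha _ hi with h | h
      · exact h
      · exact (Finset.eq_of_subset_of_card_le h (hmin _ hi)).symm.subset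
    refine ⟨Fin.cons a c, ?_, ?_⟩
    · intro i j hij
      refine Fin.cases (fun j hij => ?_) (fun i j hij => ?_) i j hij
      · refine Fin.cases ?_ (fun j => ?_) j
        · exact le_rfl
        · simpa using hle j
      · revert hij
        refine Fin.cases (fun hij => ?_) (fun j hij => ?_) j
        · exact absurd hij (by simp)
        · simpa using hcm (Fin.succ_le_succ_iff.1 hij)
    · rw [← Finset.insert_erase ha, ← hci]
      ext x
      simp [Fin.exists_fin_succ, eq_comm]

theorem aux_count {n : ℕ} (ℱ : Finset (Finset (Fin n))) (r : ℕ) :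
    ((ℱ.powersetCard r).filter (fun 𝒮 => ∀ A ∈ 𝒮, ∀ B ∈ 𝒮, A ⊆ B ∨ B ⊆ A)).card ≤
      (chs ℱ r ∅).card := by
  classical
  apply Finset.card_le_card_of_surjOn (fun c => Finset.univ.image c)
  intro S hS
  simp only [Finset.coe_filter, Finset.mem_powersetCard, Set.mem_ofPred_eq] at hS
  obtain ⟨c, hc, hcS⟩ := aux_sort r S hS.1.2 hS.2
  refine ⟨c, ?_, hcS⟩
  simp only [chs, Finset.coe_filter, Set.mem_ofPred_eq, Fintype.mem_piFinset]
  refine ⟨fun i => hS.1.1 ?_, fun i => Finset.empty_subset _, hc⟩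
  rw [← hcS]
  exact Finset.mem_image_of_mem _ (Finset.mem_univ _)

theorem stmt10 (k : ℕ) (hk : 2 ≤ k) (γ : ℝ) (hγ : 0 < γ) :
    ∃ n₀ : ℕ, ∀ n ≥ n₀,
      ∀ ℱ : Finset (Finset (Fin n)),
        (2 : ℝ) ^ ((n : ℝ) / k) ≤ (ℱ.card : ℝ) →
        (((ℱ.powersetCard (k + 1)).filter
            (fun 𝒮 => ∀ A ∈ 𝒮, ∀ B ∈ 𝒮, A ⊆ B ∨ B ⊆ A)).card : ℝ)
          ≤ γ * (ℱ.card.choose (k + 1) : ℝ) := by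
  set r := k + 1 with hr
  set t := k * (k + 1) with ht
  have hγ'0 : (0 : ℝ) < γ / ((r : ℝ) ^ r * (r.factorial : ℝ)) := by positivity
  obtain ⟨C, hC, hM⟩ := aux_main t r _ hγ'0
  obtain ⟨n₀, hn₀⟩ := pow_unbounded_of_one_lt (C ^ k) (one_lt_two : (1 : ℝ) < 2)
  refine ⟨n₀, ?_⟩
  intro n hn ℱ hm
  rcases lt_or_ge ℱ.card r with hlt | hge
  · rw [Finset.powersetCard_eq_empty.2 hlt]
    simp only [Finset.filter_empty, Finset.card_empty, Nat.cast_zero]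
    positivity
  by_contra! hcon
  have hch : (ℱ.card : ℝ) ^ r / ((r : ℝ) ^ r * (r.factorial : ℝ)) ≤ (ℱ.card.choose r : ℝ) := by
    refine le_trans ?_ (Nat.pow_le_choose (α := ℝ) r ℱ.card)
    rw [← div_div, ← div_pow]
    apply div_le_div_of_nonneg_right _ (by positivity)
    apply pow_le_pow_left₀ (by positivity)
    rw [div_le_iff₀ (by positivity)]
    obtain ⟨e, he⟩ := Nat.exists_eq_add_of_le hge
    rw [he, show r + e + 1 - r = e + 1 by omega]
    have h1 : (1 : ℝ) ≤ r := by simp [hr]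
    push_cast
    nlinarith [(Nat.cast_nonneg e : (0 : ℝ) ≤ e)]
  have h1 := hM n ℱ ∅ (by
    have h2 : γ * ((ℱ.card : ℝ) ^ r / ((r : ℝ) ^ r * (r.factorial : ℝ))) ≤
      γ * (ℱ.card.choose r : ℝ) := mul_le_mul_of_nonneg_left hch hγ.le
    have h3 : (((ℱ.powersetCard r).filter
      (fun 𝒮 => ∀ A ∈ 𝒮, ∀ B ∈ 𝒮, A ⊆ B ∨ B ⊆ A)).card : ℝ) ≤ ((chs ℱ r ∅).card : ℝ) := by
      exact_mod_cast aux_count ℱ r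
    calc _ = γ * ((ℱ.card : ℝ) ^ r / ((r : ℝ) ^ r * (r.factorial : ℝ))) := by ring
      _ ≤ _ := h2
      _ ≤ _ := hcon.le
      _ ≤ _ := h3)
  simp only [Finset.card_empty, mul_zero, pow_zero, mul_one] at h1
  have hmk : (2 : ℝ) ^ n ≤ (ℱ.card : ℝ) ^ k := by
    calc (2 : ℝ) ^ n = ((2 : ℝ) ^ ((n : ℝ) / k)) ^ k := by
          rw [← Real.rpow_natCast (_ ^ _) k, ← Real.rpow_mul (by norm_num),
            div_mul_cancel₀ _ (by positivity), Real.rpow_natCast]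
      _ ≤ _ := pow_le_pow_left₀ (by positivity) hm _
  have h4 : ((2 : ℝ) ^ n) ^ (r * (t + 1)) ≤ (C * 2 ^ ((t + 1) * n + r * n)) ^ k := by
    calc _ ≤ ((ℱ.card : ℝ) ^ k) ^ (r * (t + 1)) := pow_le_pow_left₀ (by positivity) hmk _
      _ = ((ℱ.card : ℝ) ^ (r * (t + 1))) ^ k := by rw [← pow_mul, ← pow_mul, mul_comm]
      _ ≤ _ := pow_le_pow_left₀ (by positivity) h1 _
  have h5 : ((2 : ℝ) ^ n) ^ (r * (t + 1)) = 2 ^ n * 2 ^ (((t + 1) * n + r * n) * k) := by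
    rw [← pow_mul, ← pow_add]
    congr 1
    rw [ht, hr]; ring
  rw [h5, mul_pow, ← pow_mul] at h4
  have h6 := le_of_mul_le_mul_right h4 (by positivity)
  have h7 : (2 : ℝ) ^ n₀ ≤ 2 ^ n := pow_le_pow_right₀ (by norm_num) hn
  linarith
end

section
/- Let n be a positive integer and let k be an integer with n/3 + √(2n·ln 2) ≤ k ≤ n/2. If M_{k−1} ≤ m ≤ M_k, then every family ℱ of m subsets of [n] satisfying c(ℱ) = c(n,m) (i.e. maximising the number of comparable pairs among families of m subsets of [n]) satisfies ℋ_{k−1} ⊆ ℱ ⊆ ℋ_k. -/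
open Finset

/-- `maxComp n m` is `c(n,m)`, the maximum number of comparable pairs over all families of
`m` subsets of `[n]`. -/
def maxComp (n m : ℕ) : ℕ :=
  ((Finset.univ : Finset (Finset (Fin n))).powersetCard m).sup compCount

/-- `Hfam n k = ℋ_k` is the family of subsets of `[n]` of size at most `k` or at least `n - k`. -/
def Hfam (n k : ℕ) : Finset (Finset (Fin n)) :=
  Finset.univ.filter (fun F => F.card ≤ k ∨ n - k ≤ F.card)

/-- `Mnum n k = M_k = |ℋ_k|`. -/
def Mnum (n k : ℕ) : ℕ := (Hfam n k).card

/-- partial binomial sum -/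
def binS (N r : ℕ) : ℕ := ∑ l ∈ range (r + 1), N.choose l

lemma binS_mono (r : ℕ) {N M : ℕ} (h : N ≤ M) : binS N r ≤ binS M r :=
  Finset.sum_le_sum fun l _ => Nat.choose_le_choose l h

lemma binS_succ_le (N r : ℕ) : binS (N + 1) r ≤ 2 * binS N r := by
  unfold binS
  rw [Finset.sum_range_succ' (fun l => (N+1).choose l)]
  simp only [Nat.choose_succ_succ', Nat.choose_zero_right]
  rw [Finset.sum_add_distrib]
  have h1 : ∑ l ∈ range r, N.choose l ≤ ∑ l ∈ range (r + 1), N.choose l :=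
    Finset.sum_le_sum_of_subset (Finset.range_mono (Nat.le_succ r))
  have h2 := Finset.sum_range_succ' (fun l => N.choose l) r
  simp only [Nat.choose_zero_right] at h2
  omega

lemma binS_tail (r d : ℕ) : ∀ N : ℕ, 7 * 2 ^ (N + d) ≤ 8 * binS (N + d) r → 7 * 2 ^ N ≤ 8 * binS N r := by
  induction d with
  | zero => intro N h; simpa using h
  | succ d ih =>
    intro N h
    apply ih
    have := binS_succ_le (N + d) r
    rw [← add_assoc, pow_succ] at h
    omega

lemma binvar (N : ℕ) : ∑ l ∈ range (N + 1), (N.choose l : ℝ) * (2 * l - N) ^ 2 = (N : ℝ) * 2 ^ N := by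
  have h := congrArg (Polynomial.eval (1/2 : ℝ)) (bernsteinPolynomial.variance ℝ N)
  simp only [Polynomial.eval_finsetSum, bernsteinPolynomial] at h
  simp at h
  have e : ∀ l ∈ range (N + 1), (N.choose l : ℝ) * (2 * l - N) ^ 2
      = 4 * 2 ^ N * (((N:ℝ) * 2⁻¹ - l) ^ 2 * (N.choose l * (2 ^ l)⁻¹ * (1 - 2⁻¹) ^ (N - l))) := by
    intro l hl
    have hl' : l ≤ N := by simpa [Nat.lt_succ_iff] using hl
    have : (2:ℝ) ^ N = 2 ^ l * 2 ^ (N - l) := by rw [← pow_add]; congr 1; omega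
    rw [this, show (1 - 2⁻¹ : ℝ) = 2⁻¹ by norm_num, inv_pow]
    field_simp
    ring
  rw [Finset.sum_congr rfl e, ← Finset.mul_sum, h]
  ring

lemma binS_cheb (N r : ℕ) (hr : N ≤ 2 * (r + 1)) (h : 8 * (N:ℤ) ≤ (2 * (r + 1) - N) ^ 2) (hrN : r ≤ N) (h0 : 0 < N) :
    7 * 2 ^ N ≤ 8 * binS N r := by
  have hv := binvar N
  have hs : ∑ l ∈ range (N + 1), N.choose l = 2 ^ N := Nat.sum_range_choose N
  rw [← Finset.sum_range_add_sum_Ico _ (show r + 1 ≤ N + 1 by omega)] at hs hv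
  have h1 : (∑ l ∈ Ico (r+1) (N+1), (N.choose l : ℝ)) * (8 * N) ≤
      ∑ l ∈ Ico (r+1) (N+1), (N.choose l : ℝ) * (2 * l - N) ^ 2 := by
    rw [Finset.sum_mul]
    refine Finset.sum_le_sum fun l hl => ?_
    have hl1 : r + 1 ≤ l := (Finset.mem_Ico.1 hl).1
    refine mul_le_mul_of_nonneg_left ?_ (by positivity)
    have h' : 8 * (N:ℝ) ≤ (2 * (r + 1) - N) ^ 2 := by exact_mod_cast h
    refine h'.trans ?_
    have a1 : (N:ℝ) ≤ 2 * (r + 1) := by exact_mod_cast hr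
    have a2 : (r:ℝ) + 1 ≤ l := by exact_mod_cast hl1
    apply pow_le_pow_left₀ <;> linarith
  have h2 : 0 ≤ ∑ l ∈ range (r+1), (N.choose l : ℝ) * (2 * l - N) ^ 2 :=
    Finset.sum_nonneg fun l _ => by positivity
  have h3 : (∑ l ∈ Ico (r+1) (N+1), (N.choose l : ℝ)) * 8 ≤ 2 ^ N := by
    have hN : (0:ℝ) < N := by exact_mod_cast h0
    have : N * ((∑ l ∈ Ico (r+1) (N+1), (N.choose l : ℝ)) * 8) ≤ N * 2 ^ N := by linarith
    exact le_of_mul_le_mul_left this hN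
  have h4 : (∑ l ∈ Ico (r+1) (N+1), N.choose l) * 8 ≤ 2 ^ N := by exact_mod_cast h3
  unfold binS
  omega

/-! ### degrees -/

def dg {n : ℕ} (S : Finset (Fin n)) (𝒢 : Finset (Finset (Fin n))) : ℕ :=
  (𝒢.filter (fun G => G ⊂ S)).card + (𝒢.filter (fun G => S ⊂ G)).card

lemma card_small {n : ℕ} (S : Finset (Fin n)) (r : ℕ) :
    (S.powerset.filter (fun T => T.card ≤ r)).card = binS S.card r := by
  rw [Finset.card_eq_sum_card_fiberwise (f := Finset.card) (t := range (r+1))]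
  · refine Finset.sum_congr rfl fun l hl => ?_
    rw [← Finset.card_powersetCard]
    congr 1
    ext T
    simp only [mem_filter, mem_powerset, mem_powersetCard]
    have := Finset.mem_range.1 hl
    constructor
    · rintro ⟨⟨a, b⟩, c⟩; exact ⟨a, c⟩
    · rintro ⟨a, c⟩; exact ⟨⟨a, by omega⟩, c⟩
  · intro T hT
    simp at hT
    simp; omega

lemma cardS_le {n : ℕ} (S : Finset (Fin n)) : S.card ≤ n := by
  simpa using Finset.card_le_univ S

lemma dg_Q {n : ℕ} (S : Finset (Fin n)) (r : ℕ) (hr : r ≤ n) :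
    binS S.card r + binS (n - S.card) r ≤ dg S (Hfam n r) + 2 := by
  have h1 : binS S.card r ≤ ((Hfam n r).filter (fun G => G ⊂ S)).card + 1 := by
    rw [← card_small]
    refine (Finset.card_le_card (t := insert S ((Hfam n r).filter (fun G => G ⊂ S))) ?_).trans
      (Finset.card_insert_le _ _)
    intro T hT
    simp only [mem_filter, mem_powerset] at hT
    simp only [mem_insert, mem_filter, Hfam, mem_univ, true_and]
    rcases eq_or_ne T S with h | h
    · exact Or.inl h
    · exact Or.inr ⟨Or.inl hT.2, hT.1.ssubset_of_ne h⟩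
  have h2 : binS (n - S.card) r ≤ ((Hfam n r).filter (fun G => S ⊂ G)).card + 1 := by
    have e : n - S.card = (Sᶜ).card := by simp [Finset.card_compl]
    rw [e, ← card_small]
    rw [← Finset.card_image_of_injective (f := compl) _ compl_injective]
    refine (Finset.card_le_card (t := insert S ((Hfam n r).filter (fun G => S ⊂ G))) ?_).trans
      (Finset.card_insert_le _ _)
    intro T hT
    simp only [mem_image, mem_filter, mem_powerset] at hT
    obtain ⟨C, ⟨hC, hc⟩, rfl⟩ := hT
    simp only [mem_insert, mem_filter, Hfam, mem_univ, true_and]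
    have hS : S ⊆ Cᶜ := by
      intro x hx
      rw [Finset.mem_compl]
      intro hxC
      exact (Finset.mem_compl.1 (hC hxC)) hx
    rcases eq_or_ne Cᶜ S with h | h
    · exact Or.inl h
    · refine Or.inr ⟨Or.inr ?_, hS.ssubset_of_ne h.symm⟩
      rw [Finset.card_compl, Fintype.card_fin]; omega
  unfold dg
  omega

lemma dg_univ {n : ℕ} (S : Finset (Fin n)) :
    dg S univ + 2 ≤ 2 ^ S.card + 2 ^ (n - S.card) := by
  have h1 : (univ.filter (fun G => G ⊂ S)).card + 1 ≤ 2 ^ S.card := by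
    rw [← Finset.card_powerset]
    refine Nat.succ_le_of_lt (Finset.card_lt_card ?_)
    rw [Finset.ssubset_iff_of_subset]
    · exact ⟨S, by simp, by simp⟩
    · intro T hT
      simp at hT
      simpa using hT.subset
  have h2 : (univ.filter (fun G => S ⊂ G)).card + 1 ≤ 2 ^ (n - S.card) := by
    have e : n - S.card = (Sᶜ).card := by simp [Finset.card_compl]
    rw [e, ← Finset.card_powerset]
    rw [← Finset.card_image_of_injective (f := compl) _ compl_injective]
    refine Nat.succ_le_of_lt (Finset.card_lt_card ?_)
    rw [Finset.ssubset_iff_of_subset]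
    · refine ⟨Sᶜ, by simp, by simp⟩
    · intro T hT
      simp only [mem_image, mem_filter, mem_univ, true_and] at hT
      obtain ⟨C, hC, rfl⟩ := hT
      rw [mem_powerset]
      exact Finset.compl_subset_compl.2 hC.subset
  unfold dg
  omega

lemma dg_mono {n : ℕ} (S : Finset (Fin n)) {𝒢 ℋ : Finset (Finset (Fin n))} (h : 𝒢 ⊆ ℋ) :
    dg S 𝒢 ≤ dg S ℋ :=
  Nat.add_le_add (Finset.card_le_card (Finset.filter_subset_filter _ h))
    (Finset.card_le_card (Finset.filter_subset_filter _ h))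

lemma cross_eq {n : ℕ} (𝒜 ℬ : Finset (Finset (Fin n))) :
    crossComp 𝒜 ℬ = ∑ A ∈ 𝒜, ∑ B ∈ ℬ, if A ⊂ B then 1 else 0 := by
  unfold crossComp
  rw [Finset.card_filter, Finset.sum_product]

lemma sum_dg {n : ℕ} (𝒜 ℬ : Finset (Finset (Fin n))) :
    ∑ A ∈ 𝒜, dg A ℬ = crossComp ℬ 𝒜 + crossComp 𝒜 ℬ := by
  rw [cross_eq, cross_eq, Finset.sum_comm, ← Finset.sum_add_distrib]
  refine Finset.sum_congr rfl fun A _ => ?_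
  simp only [dg, Finset.card_filter]

lemma cross_union_left {n : ℕ} {𝒜 ℬ : Finset (Finset (Fin n))} (h : Disjoint 𝒜 ℬ)
    (𝒞 : Finset (Finset (Fin n))) :
    crossComp (𝒜 ∪ ℬ) 𝒞 = crossComp 𝒜 𝒞 + crossComp ℬ 𝒞 := by
  simp only [cross_eq]; rw [Finset.sum_union h]

lemma cross_union_right {n : ℕ} {𝒜 ℬ : Finset (Finset (Fin n))} (h : Disjoint 𝒜 ℬ)
    (𝒞 : Finset (Finset (Fin n))) :
    crossComp 𝒞 (𝒜 ∪ ℬ) = crossComp 𝒞 𝒜 + crossComp 𝒞 ℬ := by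
  simp only [cross_eq]; rw [← Finset.sum_add_distrib]
  exact Finset.sum_congr rfl fun A _ => Finset.sum_union h

lemma comp_union {n : ℕ} {𝒜 ℬ : Finset (Finset (Fin n))} (h : Disjoint 𝒜 ℬ) :
    compCount (𝒜 ∪ ℬ) = compCount 𝒜 + crossComp 𝒜 ℬ + crossComp ℬ 𝒜 + compCount ℬ := by
  unfold compCount
  rw [cross_union_left h, cross_union_right h, cross_union_right h]; ring

lemma comp_le_max {n m : ℕ} {ℱ : Finset (Finset (Fin n))} (h : ℱ.card = m) :
    compCount ℱ ≤ maxComp n m :=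
  Finset.le_sup (f := compCount) (by simp [Finset.mem_powersetCard, h])

lemma swap_base {n m : ℕ} {R 𝒰 𝒱 : Finset (Finset (Fin n))} (hU : Disjoint R 𝒰) (hV : Disjoint R 𝒱)
    (hc : 𝒰.card = 𝒱.card) (hm : (R ∪ 𝒱).card = m) (hmax : compCount (R ∪ 𝒱) = maxComp n m) :
    crossComp R 𝒰 + crossComp 𝒰 R + compCount 𝒰 ≤ ∑ V ∈ 𝒱, dg V univ := by
  have h1 : compCount (R ∪ 𝒰) ≤ compCount (R ∪ 𝒱) := by
    rw [hmax]
    apply comp_le_max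
    rw [← hm, Finset.card_union_of_disjoint hU, Finset.card_union_of_disjoint hV, hc]
  rw [comp_union hU, comp_union hV] at h1
  have h2 : ∑ V ∈ 𝒱, dg V (R ∪ 𝒱) ≤ ∑ V ∈ 𝒱, dg V univ :=
    Finset.sum_le_sum fun V _ => dg_mono V (Finset.subset_univ _)
  rw [sum_dg, cross_union_left hV, cross_union_right hV] at h2
  unfold compCount at *
  omega

lemma swap_two {n m : ℕ} {R 𝒰 𝒱 : Finset (Finset (Fin n))} (hU : Disjoint R 𝒰) (hV : Disjoint R 𝒱)
    (hc : 𝒰.card = 𝒱.card) (hm : (R ∪ 𝒱).card = m) (hmax : compCount (R ∪ 𝒱) = maxComp n m)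
    {Q : Finset (Finset (Fin n))} (hQ : Q ⊆ R ∪ 𝒰) :
    ∑ U ∈ 𝒰, dg U Q ≤ 2 * ∑ V ∈ 𝒱, dg V univ := by
  have h1 := swap_base hU hV hc hm hmax
  have h2 : ∑ U ∈ 𝒰, dg U Q ≤ ∑ U ∈ 𝒰, dg U (R ∪ 𝒰) :=
    Finset.sum_le_sum fun V _ => dg_mono V hQ
  rw [sum_dg 𝒰 (R ∪ 𝒰), cross_union_left hU, cross_union_right hU] at h2
  unfold compCount at *
  omega

lemma swap_one {n m : ℕ} {ℱ Q : Finset (Finset (Fin n))} (hm : ℱ.card = m)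
    (hmax : compCount ℱ = maxComp n m) (hQ : Q ⊆ ℱ) {U V : Finset (Fin n)}
    (hU : U ∉ ℱ) (hV : V ∈ ℱ) (hVQ : V ∉ Q) : dg U Q ≤ dg V univ := by
  have e : ℱ.erase V ∪ {V} = ℱ := by
    rw [Finset.union_comm, ← Finset.insert_eq, Finset.insert_erase hV]
  have h1 := swap_base (m := m) (R := ℱ.erase V) (𝒰 := {U}) (𝒱 := {V})
    (by simp [hU]) (by simp) (by simp) (by rw [e, hm]) (by rw [e, hmax])
  have h2 : dg U Q ≤ dg U (ℱ.erase V) := dg_mono U (Finset.subset_erase.2 ⟨hQ, hVQ⟩)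
  have h3 := sum_dg {U} (ℱ.erase V)
  simp only [Finset.sum_singleton] at h1 h3
  omega

lemma f_conv {n a v : ℕ} (h1 : a ≤ v) (h2 : v + a ≤ n) :
    2 ^ v + 2 ^ (n - v) ≤ 2 ^ a + 2 ^ (n - a) := by
  obtain ⟨p, rfl⟩ := Nat.exists_eq_add_of_le h1
  obtain ⟨q, rfl⟩ := Nat.exists_eq_add_of_le h2
  rw [show a + p + a + q - (a + p) = a + q by omega, show a + p + a + q - a = a + p + q by omega]
  simp only [pow_add]
  have hp : 1 ≤ 2 ^ p := Nat.one_le_two_pow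
  have hq : 1 ≤ 2 ^ q := Nat.one_le_two_pow
  obtain ⟨x, hx⟩ := Nat.exists_eq_add_of_le hp
  obtain ⟨y, hy⟩ := Nat.exists_eq_add_of_le hq
  rw [hx, hy]
  have : 0 ≤ 2 ^ a * (x * y) := Nat.zero_le _
  nlinarith

lemma f_strict {n a v : ℕ} (h1 : a + 1 ≤ v) (h2 : v + (a + 1) ≤ n) :
    8 * (2 ^ v + 2 ^ (n - v)) < 7 * (2 ^ a + 2 ^ (n - a)) := by
  have h := f_conv h1 h2
  have e : n - a = (n - (a + 1)) + 1 := by omega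
  have h3 : 2 ^ (a + 1) ≤ 2 ^ (n - (a + 1)) := Nat.pow_le_pow_right (by norm_num) (by omega)
  have h4 : 0 < 2 ^ a := by positivity
  rw [e]
  rw [pow_succ 2 a] at h h3
  rw [pow_succ]
  omega

lemma Hfam_mono (n : ℕ) {i j : ℕ} (h : i ≤ j) : Hfam n i ⊆ Hfam n j := by
  intro S hS
  simp only [Hfam, mem_filter, mem_univ, true_and] at *
  omega

lemma main_tail {n k : ℕ} (hn : 0 < n) (h2 : 2 * k ≤ n) (h3 : n ≤ 3 * k)
    (h12 : 12 * (n : ℤ) ≤ (3 * k - n) ^ 2) :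
    24 ≤ k ∧ 7 * 2 ^ (n - k + 3) ≤ 8 * binS (n - k + 3) (k - 3) := by
  obtain ⟨z, hz⟩ := Nat.exists_eq_add_of_le h3
  have hz' : (3 * (k:ℤ) - n) = z := by omega
  rw [hz'] at h12
  have hzn : 2 * (z:ℤ) ≤ n := by omega
  have hz24 : 24 ≤ (z:ℤ) := by
    by_contra hlt
    have : (0:ℤ) < n := by exact_mod_cast hn
    nlinarith
  refine ⟨by omega, ?_⟩
  apply binS_cheb
  · omega
  · have hk : (((k - 3 : ℕ)) : ℤ) = k - 3 := by omega
    have hN : (((n - k + 3 : ℕ)) : ℤ) = n - k + 3 := by omega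
    rw [hk, hN]
    have e : (2 * ((k:ℤ) - 3 + 1) - (n - k + 3)) = z - 7 := by omega
    rw [e]
    have hk3 : 3 * (k:ℤ) = n + z := by omega
    nlinarith
  · omega
  · omega

theorem stmt12 (n : ℕ) (hn : 0 < n) (k : ℕ)
    (hk1 : (n : ℝ) / 3 + Real.sqrt (2 * n * Real.log 2) ≤ k)
    (hk2 : (k : ℝ) ≤ (n : ℝ) / 2)
    (m : ℕ) (hm1 : Mnum n (k - 1) ≤ m) (hm2 : m ≤ Mnum n k)
    (ℱ : Finset (Finset (Fin n))) (hcard : ℱ.card = m)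
    (hmax : compCount ℱ = maxComp n m) :
    Hfam n (k - 1) ⊆ ℱ ∧ ℱ ⊆ Hfam n k := by
  have h2 : 2 * k ≤ n := by
    have : 2 * (k:ℝ) ≤ n := by linarith
    exact_mod_cast this
  have hs0 := Real.sqrt_nonneg (2 * n * Real.log 2)
  have h3 : n ≤ 3 * k := by
    have : (n:ℝ) ≤ 3 * k := by linarith
    exact_mod_cast this
  have h12 : 12 * (n : ℤ) ≤ (3 * k - n) ^ 2 := by
    have hl := Real.log_two_gt_d9
    have hn' : (0:ℝ) < n := by exact_mod_cast hn
    have hsq := Real.sq_sqrt (show 0 ≤ 2 * n * Real.log 2 by positivity)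
    have : 12 * (n : ℝ) ≤ (3 * k - n) ^ 2 := by
      have h5 : 3 * Real.sqrt (2 * n * Real.log 2) ≤ 3 * k - n := by linarith
      have h6 := pow_le_pow_left₀ (by positivity) h5 2
      rw [mul_pow, hsq] at h6
      nlinarith
    exact_mod_cast this
  obtain ⟨hk24, htail⟩ := main_tail hn h2 h3 h12
  -- step 1
  have hQ : Hfam n (k - 3) ⊆ ℱ := by
    by_contra hnot
    have hne : (Hfam n (k - 3) \ ℱ).Nonempty := Finset.sdiff_nonempty.2 hnot
    have hle : (Hfam n (k - 3) \ ℱ).card ≤ (ℱ \ Hfam n (k - 1)).card := by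
      have a1 : (Hfam n (k - 3) \ ℱ).card ≤ (Hfam n (k - 1) \ ℱ).card :=
        Finset.card_le_card (Finset.sdiff_subset_sdiff (Hfam_mono n (by omega)) (le_refl _))
      have a2 := Finset.card_sdiff_add_card_inter (Hfam n (k - 1)) ℱ
      have a3 := Finset.card_sdiff_add_card_inter ℱ (Hfam n (k - 1))
      rw [Finset.inter_comm] at a3
      unfold Mnum at hm1
      omega
    obtain ⟨𝒱, hV, hVc⟩ := Finset.exists_subset_card_eq hle
    have hVF : 𝒱 ⊆ ℱ := hV.trans Finset.sdiff_subset
    have e : (ℱ \ 𝒱) ∪ 𝒱 = ℱ := Finset.sdiff_union_of_subset hVF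
    have h1 := swap_two (m := m) (R := ℱ \ 𝒱) (𝒰 := Hfam n (k - 3) \ ℱ) (𝒱 := 𝒱)
      (Finset.disjoint_left.2 fun S a b => (Finset.mem_sdiff.1 b).2 (Finset.mem_sdiff.1 a).1)
      Finset.sdiff_disjoint hVc.symm (by rw [e, hcard]) (by rw [e, hmax])
      (Q := Hfam n (k - 3)) (by
        intro S hS
        simp only [mem_union, mem_sdiff]
        by_cases hSF : S ∈ ℱ
        · left
          refine ⟨hSF, fun hSV => (Finset.mem_sdiff.1 (hV hSV)).2 (Hfam_mono n (by omega) hS)⟩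
        · exact Or.inr ⟨hS, hSF⟩)
    have hD : 2 ^ k ≤ 2 ^ (n - k) := Nat.pow_le_pow_right (by norm_num) (by omega)
    have hpos : 0 < 2 ^ (n - k) := by positivity
    have hup : ∑ V ∈ 𝒱, dg V univ ≤ 𝒱.card * (2 * 2 ^ (n - k) - 2) := by
      rw [← smul_eq_mul]
      refine Finset.sum_le_card_nsmul _ _ _ fun V hVm => ?_
      have b1 := dg_univ V
      have b2 := (Finset.mem_sdiff.1 (hV hVm)).2
      simp only [Hfam, mem_filter, mem_univ, true_and] at b2
      have b3 := f_conv (n := n) (a := k) (v := V.card) (by omega) (by omega)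
      omega
    have hlo : (Hfam n (k - 3) \ ℱ).card * (7 * 2 ^ (n - k) - 2) ≤
        ∑ U ∈ Hfam n (k - 3) \ ℱ, dg U (Hfam n (k - 3)) := by
      rw [← smul_eq_mul]
      refine Finset.card_nsmul_le_sum _ _ _ fun U hU => ?_
      have b1 := dg_Q U (k - 3) (by omega)
      have b2 := (Finset.mem_sdiff.1 hU).1
      simp only [Hfam, mem_filter, mem_univ, true_and] at b2
      have b4 := cardS_le U
      have b5 : 7 * 2 ^ (n - k) ≤ binS (n - k + 3) (k - 3) := by
        rw [pow_add] at htail; omega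
      rcases b2 with b2 | b2
      · have := binS_mono (k - 3) (show n - k + 3 ≤ n - U.card by omega)
        omega
      · have := binS_mono (k - 3) (show n - k + 3 ≤ U.card by omega)
        omega
    rw [← hVc] at hlo
    have hc0 : 0 < 𝒱.card := by rw [hVc]; exact hne.card_pos
    have h7 : 𝒱.card * (7 * 2 ^ (n - k) - 2) ≤ 𝒱.card * (2 * (2 * 2 ^ (n - k) - 2)) := by
      calc _ ≤ _ := hlo
        _ ≤ _ := h1
        _ ≤ 2 * (𝒱.card * (2 * 2 ^ (n - k) - 2)) := by omega
        _ = _ := by ring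
    have h8 := Nat.le_of_mul_le_mul_left h7 hc0
    omega
  -- step 2
  have key : ∀ j, j ≤ k → k - 3 ≤ j → ∀ U V, U ∉ ℱ → V ∈ ℱ → U ∈ Hfam n j → V ∈ Hfam n j := by
    intro j hj hj3 U V hU hV hUj
    by_contra hVj
    have hVQ : V ∉ Hfam n (k - 3) := fun h => hVj (Hfam_mono n hj3 h)
    have hUQ : U ∉ Hfam n (k - 3) := fun h => hU (hQ h)
    have c1 := swap_one hcard hmax hQ hU hV hVQ
    have c2 := dg_univ V
    have c3 := dg_Q U (k - 3) (by omega)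
    have c4 := cardS_le U
    simp only [Hfam, mem_filter, mem_univ, true_and] at hUQ hUj hVj
    have c5 : 7 * 2 ^ U.card ≤ 8 * binS U.card (k - 3) := by
      apply binS_tail (k - 3) (n - k + 3 - U.card)
      rwa [show U.card + (n - k + 3 - U.card) = n - k + 3 by omega]
    have c6 : 7 * 2 ^ (n - U.card) ≤ 8 * binS (n - U.card) (k - 3) := by
      apply binS_tail (k - 3) (n - k + 3 - (n - U.card))
      rwa [show (n - U.card) + (n - k + 3 - (n - U.card)) = n - k + 3 by omega]
    rcases hUj with h | h
    · have := f_strict (n := n) (a := U.card) (v := V.card) (by omega) (by omega)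
      omega
    · have := f_strict (n := n) (a := n - U.card) (v := V.card) (by omega) (by omega)
      rw [show n - (n - U.card) = U.card by omega] at this
      omega
  constructor
  · intro U hU
    by_contra hUF
    have hsub : ℱ ⊂ Hfam n (k - 1) := by
      refine (Finset.ssubset_iff_of_subset ?_).2 ⟨U, hU, hUF⟩
      intro V hV
      exact key (k - 1) (by omega) (by omega) U V hUF hV hU
    have := Finset.card_lt_card hsub
    unfold Mnum at hm1
    omega
  · intro V hV
    by_contra hVH
    have hsub : Hfam n k ⊂ ℱ := by
      refine (Finset.ssubset_iff_of_subset ?_).2 ⟨V, hV, hVH⟩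
      intro U hU
      by_contra hUF
      exact hVH (key k le_rfl (by omega) U V hUF hV hU)
    have := Finset.card_lt_card hsub
    unfold Mnum at hm2
    omega
end
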